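/- arXiv:1705.03300 — 2 statements merged into one kernel-verified Lean document; each statement's English description precedes it below -/
import Mathlib

section
/- Let (A,G,α) be a C*-dynamical system with G discrete. If Φ is a completely positive map on A⋊_{α,r}G, then the function h_Φ : G → B(A) given by h_Φ(s)(a) = E(Φ(π(a)λ_s)λ_s*) is a completely positive Herz-Schur (A,G,α)-multiplier. -/
noncomputable section

open scoped ComplexOrder
open Matrix
open scoped ENNReal

/-- Positivity of a matrix over a (possibly non-unital) C*-algebra:
`M` is positive iff it factors as `Nᴴ * N`. -/
def MatPos {R : Type*} [NonUnitalSemiring R] [StarRing R] {ν : Type*} [Fintype ν]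
    (M : Matrix ν ν R) : Prop :=
  ∃ N : Matrix ν ν R, M = Nᴴ * N

/-- A linear map between C*-algebras is completely positive if all its matrix
amplifications preserve positivity. -/
def IsCompletelyPositive {R S : Type*} [NonUnitalSemiring R] [StarRing R] [Module ℂ R]
    [NonUnitalSemiring S] [StarRing S] [Module ℂ S] (Φ : R →ₗ[ℂ] S) : Prop :=
  ∀ (n : ℕ) (M : Matrix (Fin n) (Fin n) R), MatPos M → MatPos (M.map Φ)

variable {H : Type*} [NormedAddCommGroup H] [InnerProductSpace ℂ H] [CompleteSpace H]

/-- The bounded operator on the Hilbert space `H ⊕₂ ⋯ ⊕₂ H` associated to an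
operator-valued `n × n` matrix. -/
def matOp {ν : Type*} [Fintype ν] (M : Matrix ν ν (H →L[ℂ] H)) :
    PiLp 2 (fun _ : ν => H) →L[ℂ] PiLp 2 (fun _ : ν => H) :=
  ((PiLp.continuousLinearEquiv 2 ℂ (fun _ : ν => H)).symm :
      (∀ _ : ν, H) →L[ℂ] PiLp 2 (fun _ : ν => H)) ∘L
    (ContinuousLinearMap.pi fun i =>
      (∑ j, (M i j) ∘L (ContinuousLinearMap.proj j)) ∘L
        ((PiLp.continuousLinearEquiv 2 ℂ (fun _ : ν => H)) :
          PiLp 2 (fun _ : ν => H) →L[ℂ] ∀ _ : ν, H))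

variable {H : Type*} [NormedAddCommGroup H] [InnerProductSpace ℂ H] [CompleteSpace H]
variable {X : Type*}

/-- Evaluation at a point, as a continuous linear map `ℓ²(X,H) → H`. -/
def lpEval (x : X) : lp (fun _ : X => H) 2 →L[ℂ] H :=
  LinearMap.mkContinuous
    { toFun := fun f => f x
      map_add' := fun f g => by
        have := lp.coeFn_add f g
        exact congrFun this x
      map_smul' := fun c f => by
        have := lp.coeFn_smul c f
        exact congrFun this x }
    1 (fun f => by
      simpa using lp.norm_apply_le_norm (by norm_num) f x)

/-- Inclusion of the `x`-th coordinate, as a continuous linear map `H → ℓ²(X,H)`. -/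
def lpSingle (x : X) : H →L[ℂ] lp (fun _ : X => H) 2 := by
  classical
  exact LinearMap.mkContinuous
    { toFun := fun ξ => lp.single 2 x ξ
      map_add' := fun ξ η => by
        apply lp.ext
        funext j
        by_cases h : j = x
        · subst h; simp [lp.single_apply_self]
        · simp [lp.single_apply_ne _ _ _ h, lp.coeFn_add]
      map_smul' := fun c ξ => by simp [lp.single_smul] }
    1 (fun ξ => by
      simpa using (lp.norm_single (p := 2) (by norm_num)
        (fun _ : X => ξ) x).le)

/-- The elementary operator `e_{x,y} ⊗ T` on `ℓ²(X,H)`. -/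
def elemOp (x y : X) (T : H →L[ℂ] H) :
    lp (fun _ : X => H) 2 →L[ℂ] lp (fun _ : X => H) 2 :=
  (lpSingle x) ∘L T ∘L (lpEval y)

/-- The operator `T_k` on `ℓ²(X,H)` associated with a finitely supported kernel
`k : X × X → B(H)`; it is (defined to be) `0` if `k` is not finitely supported. -/
def TOp (k : X × X → (H →L[ℂ] H)) :
    lp (fun _ : X => H) 2 →L[ℂ] lp (fun _ : X => H) 2 :=
  ∑ᶠ (p : X × X), elemOp p.1 p.2 (k p)

variable {G : Type*} [Group G]

/-- The left regular translation `λ_t` on `ℓ²(G,H)`. -/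
def lam (t : G) : lp (fun _ : G => H) 2 →L[ℂ] lp (fun _ : G => H) 2 :=
  LinearMap.mkContinuous
    { toFun := fun f =>
        ⟨fun s => f (t⁻¹ * s), by
          apply memℓp_gen
          have hf : Summable fun s => ‖f s‖ ^ (2 : ℝ≥0∞).toReal :=
            (lp.memℓp f).summable (by norm_num)
          exact ((Equiv.mulLeft t⁻¹).summable_iff
            (f := fun s => ‖f s‖ ^ (2 : ℝ≥0∞).toReal)).2 hf⟩
      map_add' := fun f g => by
        apply lp.ext; funext s
        exact congrFun (lp.coeFn_add f g) (t⁻¹ * s)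
      map_smul' := fun c f => by
        apply lp.ext; funext s
        exact congrFun (lp.coeFn_smul c f) (t⁻¹ * s) }
    1 (fun f => by
      rw [one_mul]
      refine lp.norm_le_of_tsum_le (by norm_num) (norm_nonneg f) ?_
      have h1 : ∑' (s : G), ‖f (t⁻¹ * s)‖ ^ (2 : ℝ≥0∞).toReal
          = ∑' (s : G), ‖f s‖ ^ (2 : ℝ≥0∞).toReal :=
        (Equiv.mulLeft t⁻¹).tsum_eq (fun s => ‖f s‖ ^ (2 : ℝ≥0∞).toReal)
      show ∑' (s : G), ‖f (t⁻¹ * s)‖ ^ (2 : ℝ≥0∞).toReal ≤ ‖f‖ ^ (2 : ℝ≥0∞).toReal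
      rw [h1, ← lp.norm_rpow_eq_tsum (by norm_num) f])

/-- The diagonal ("block multiplication") operator on `ℓ²(X,H)` associated with a
uniformly bounded family of operators. -/
def diagOp (T : X → (H →L[ℂ] H)) (C : ℝ) (hC : ∀ x, ‖T x‖ ≤ C) :
    lp (fun _ : X => H) 2 →L[ℂ] lp (fun _ : X => H) 2 := by
  have hC' : ∀ x, ‖T x‖ ≤ max C 0 := fun x => (hC x).trans (le_max_left _ _)
  have hr : (0:ℝ) < (2 : ℝ≥0∞).toReal := by norm_num
  have key : ∀ (f : lp (fun _ : X => H) 2) (x : X),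
      ‖T x (f x)‖ ^ (2 : ℝ≥0∞).toReal
        ≤ (max C 0) ^ (2 : ℝ≥0∞).toReal * ‖f x‖ ^ (2 : ℝ≥0∞).toReal := by
    intro f x
    have h1 : ‖T x (f x)‖ ≤ max C 0 * ‖f x‖ :=
      ((T x).le_opNorm (f x)).trans
        (mul_le_mul_of_nonneg_right (hC' x) (norm_nonneg _))
    calc ‖T x (f x)‖ ^ (2 : ℝ≥0∞).toReal
        ≤ (max C 0 * ‖f x‖) ^ (2 : ℝ≥0∞).toReal :=
          Real.rpow_le_rpow (norm_nonneg _) h1 hr.le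
      _ = (max C 0) ^ (2 : ℝ≥0∞).toReal * ‖f x‖ ^ (2 : ℝ≥0∞).toReal :=
          Real.mul_rpow (le_max_right _ _) (norm_nonneg _)
  have mem : ∀ f : lp (fun _ : X => H) 2, Memℓp (fun x => T x (f x)) 2 := by
    intro f
    apply memℓp_gen
    exact Summable.of_nonneg_of_le
      (fun x => Real.rpow_nonneg (norm_nonneg _) _) (key f)
      (((lp.memℓp f).summable hr).mul_left _)
  exact LinearMap.mkContinuous
    { toFun := fun f => ⟨fun x => T x (f x), mem f⟩
      map_add' := fun f g => by
        apply lp.ext; funext x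
        have := congrFun (lp.coeFn_add f g) x
        show T x ((f + g) x) = _
        rw [this]
        exact map_add (T x) (f x) (g x)
      map_smul' := fun c f => by
        apply lp.ext; funext x
        have := congrFun (lp.coeFn_smul c f) x
        show T x ((c • f) x) = _
        rw [this]
        simp [lp.coeFn_smul] }
    (max C 0) (fun f => by
      refine lp.norm_le_of_tsum_le hr (by positivity) ?_
      show ∑' (x : X), ‖T x (f x)‖ ^ (2 : ℝ≥0∞).toReal ≤ _
      calc ∑' (x : X), ‖T x (f x)‖ ^ (2 : ℝ≥0∞).toReal
          ≤ ∑' (x : X), (max C 0) ^ (2 : ℝ≥0∞).toReal * ‖f x‖ ^ (2 : ℝ≥0∞).toReal :=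
            Summable.tsum_le_tsum (key f)
              (Summable.of_nonneg_of_le
                (fun x => Real.rpow_nonneg (norm_nonneg _) _) (key f)
                (((lp.memℓp f).summable hr).mul_left _))
              (((lp.memℓp f).summable hr).mul_left _)
        _ = (max C 0) ^ (2 : ℝ≥0∞).toReal * ∑' (x : X), ‖f x‖ ^ (2 : ℝ≥0∞).toReal :=
            tsum_mul_left
        _ = (max C 0) ^ (2 : ℝ≥0∞).toReal * ‖f‖ ^ (2 : ℝ≥0∞).toReal := by
            rw [lp.norm_rpow_eq_tsum hr]
        _ = (max C 0 * ‖f‖) ^ (2 : ℝ≥0∞).toReal :=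
            (Real.mul_rpow (by positivity) (norm_nonneg _)).symm)

section CB

variable {A' B' : Type*} [AddCommMonoid A'] [Module ℂ A'] [AddCommMonoid B'] [Module ℂ B']
variable {K : Type*} [NormedAddCommGroup K] [InnerProductSpace ℂ K] [CompleteSpace K]

/-- All matrix amplifications of `Φ` are bounded by `C`, where matrices over the abstract
spaces are normed through the given embeddings into concrete operator algebras. -/
def CBBound (ιA : A' → (H →L[ℂ] H)) (ιB : B' → (K →L[ℂ] K))
    (Φ : A' →ₗ[ℂ] B') (C : ℝ) : Prop :=
  ∀ (n : ℕ) (M : Matrix (Fin n) (Fin n) A'),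
    ‖matOp (M.map (fun a => ιB (Φ a)))‖ ≤ C * ‖matOp (M.map ιA)‖

/-- Complete boundedness of a linear map, relative to embeddings of its domain and
codomain into concrete operator algebras. -/
def IsCB (ιA : A' → (H →L[ℂ] H)) (ιB : B' → (K →L[ℂ] K)) (Φ : A' →ₗ[ℂ] B') : Prop :=
  ∃ C : ℝ, 0 ≤ C ∧ CBBound ιA ιB Φ C

/-- The completely bounded norm of a linear map, relative to embeddings of its domain
and codomain into concrete operator algebras. -/
def cbNorm (ιA : A' → (H →L[ℂ] H)) (ιB : B' → (K →L[ℂ] K)) (Φ : A' →ₗ[ℂ] B') : ℝ :=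
  sInf { C : ℝ | 0 ≤ C ∧ CBBound ιA ιB Φ C }

end CB

section Schur

variable {A : Type*} [NonUnitalCStarAlgebra A]

/-- A *-representation is non-degenerate if the span of the vectors in its range is dense. -/
def NondegenerateRep {K : Type*} [NormedAddCommGroup K] [InnerProductSpace ℂ K]
    [CompleteSpace K] (ρ : A →⋆ₙₐ[ℂ] (K →L[ℂ] K)) : Prop :=
  Dense (Submodule.span ℂ {ξ : K | ∃ (a : A) (v : K), ρ a v = ξ} : Set K)

/-- A function `φ : X × X → CB(A, B(H))` is of positive type if it maps positive
matrices to positive matrices, entrywise. -/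
def PositiveType (φ : X → X → (A →ₗ[ℂ] (H →L[ℂ] H))) : Prop :=
  ∀ (m : ℕ) (x : Fin m → X) (a : Matrix (Fin m) (Fin m) A),
    MatPos a → MatPos (Matrix.of fun p q => φ (x p) (x q) (a p q))

/-- A kernel `k : X × X → A` is positive definite if all the matrices obtained by
sampling it at finitely many points are positive. -/
def PosDefKernel (k : X × X → A) : Prop :=
  ∀ (n : ℕ) (x : Fin n → X), MatPos (Matrix.of fun i j => k (x i, x j))

/-- The operator `T_k` on `ℓ²(X,H)` of a kernel `k : X × X → A`, via the embedding
`ι : A → B(H)` (it is `0` unless `k` is finitely supported). -/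
def TKer (ι : A →⋆ₙₐ[ℂ] (H →L[ℂ] H)) (k : X × X → A) :
    lp (fun _ : X => H) 2 →L[ℂ] lp (fun _ : X => H) 2 :=
  TOp (fun p => ι (k p))

/-- `C` is a complete bound for the Schur multiplication map `S_φ : T_k ↦ T_{φ·k}`,
tested on (matrices of) finitely supported kernels, which span a dense subspace of
`K(ℓ²(X)) ⊗ A`. -/
def SchurBound (ι : A →⋆ₙₐ[ℂ] (H →L[ℂ] H)) (φ : X → X → (A →ₗ[ℂ] (H →L[ℂ] H)))
    (C : ℝ) : Prop :=
  ∀ (n : ℕ) (k : Fin n → Fin n → (X × X → A)),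
    (∀ i j, (Function.support (k i j)).Finite) →
    ‖matOp (Matrix.of fun i j => TOp (fun p => φ p.1 p.2 (k i j p)))‖
      ≤ C * ‖matOp (Matrix.of fun i j => TKer ι (k i j))‖

/-- `φ` is a Schur `A`-multiplier: the map `S_φ : T_k ↦ T_{φ·k}` is completely bounded. -/
def IsSchurMultiplier (ι : A →⋆ₙₐ[ℂ] (H →L[ℂ] H))
    (φ : X → X → (A →ₗ[ℂ] (H →L[ℂ] H))) : Prop :=
  ∃ C : ℝ, 0 ≤ C ∧ SchurBound ι φ C

/-- The multiplier norm `‖φ‖_m = ‖S_φ‖_cb` of a Schur `A`-multiplier. -/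
def schurNorm (ι : A →⋆ₙₐ[ℂ] (H →L[ℂ] H))
    (φ : X → X → (A →ₗ[ℂ] (H →L[ℂ] H))) : ℝ :=
  sInf { C : ℝ | 0 ≤ C ∧ SchurBound ι φ C }

/-- Complete positivity of the map `S_φ : K(ℓ²(X)) ⊗ A → K(ℓ²(X)) ⊗ B(H)`, tested on
(matrices of) finitely supported kernels. -/
def SchurCP (ι : A →⋆ₙₐ[ℂ] (H →L[ℂ] H)) (φ : X → X → (A →ₗ[ℂ] (H →L[ℂ] H))) : Prop :=
  ∀ (n : ℕ) (k : Fin n → Fin n → (X × X → A)),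
    (∀ i j, (Function.support (k i j)).Finite) →
    MatPos (Matrix.of fun i j => TKer ι (k i j)) →
    MatPos (Matrix.of fun i j => TOp (fun p => φ p.1 p.2 (k i j p)))

end Schur

section Dynamics

variable {A : Type*} [NonUnitalCStarAlgebra A]

/-- `α` is an action of the group `G` on `A` by *-automorphisms. -/
def IsAction (α : G → A ≃⋆ₐ[ℂ] A) : Prop :=
  (∀ a, α 1 a = a) ∧ ∀ s t : G, ∀ a : A, α (s * t) a = α s (α t a)

/-- A *-automorphism of `A`, as a `ℂ`-linear map. -/
def autLin (e : A ≃⋆ₐ[ℂ] A) : A →ₗ[ℂ] A :=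
  { toFun := e
    map_add' := fun a b => map_add e a b
    map_smul' := fun c a => map_smul e c a }

/-- The representation `π` of `A` on `ℓ²(G,H)`: `(π(a)ξ)(s) = α_{s⁻¹}(a)(ξ(s))`. -/
def piRep (ι : A →⋆ₙₐ[ℂ] (H →L[ℂ] H)) (α : G → A ≃⋆ₐ[ℂ] A) (a : A) :
    lp (fun _ : G => H) 2 →L[ℂ] lp (fun _ : G => H) 2 :=
  diagOp (fun s => ι (α s⁻¹ a)) ‖a‖ (fun s =>
    (NonUnitalStarAlgHom.norm_apply_le ι (α s⁻¹ a)).trans_eq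
      (StarAlgEquiv.norm_map (α s⁻¹) a))

/-- The reduced crossed product `A ⋊_{α,r} G`, realised concretely on `ℓ²(G,H)` as the
norm closure of the linear span of the operators `π(a)λ_t`. -/
def CrossedSet (ι : A →⋆ₙₐ[ℂ] (H →L[ℂ] H)) (α : G → A ≃⋆ₐ[ℂ] A) :
    Set (lp (fun _ : G => H) 2 →L[ℂ] lp (fun _ : G => H) 2) :=
  closure (Submodule.span ℂ
    {x | ∃ (a : A) (t : G), x = piRep ι α a * lam t} : Set _)

/-- `E` is the canonical conditional expectation of the reduced crossed product onto `A`: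
it is characterised by `ι (E x) = (x)_{e,e}`, the `(e,e)` matrix entry of `x`. -/
def IsCondExp (ι : A →⋆ₙₐ[ℂ] (H →L[ℂ] H)) (α : G → A ≃⋆ₐ[ℂ] A)
    (E : (lp (fun _ : G => H) 2 →L[ℂ] lp (fun _ : G => H) 2) →ₗ[ℂ] A) : Prop :=
  ∀ x ∈ CrossedSet ι α, ι (E x) = (lpEval (1 : G)) ∘L x ∘L (lpSingle (1 : G))

/-- The defining property of the map `S_F` associated with `F : G → CB(A)`:
`S_F(π(a)λ_s) = π(F(s)(a))λ_s`. -/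
def HSGenProp (ι : A →⋆ₙₐ[ℂ] (H →L[ℂ] H)) (α : G → A ≃⋆ₐ[ℂ] A)
    (F : G → (A →ₗ[ℂ] A))
    (Φ : (lp (fun _ : G => H) 2 →L[ℂ] lp (fun _ : G => H) 2) →ₗ[ℂ]
         (lp (fun _ : G => H) 2 →L[ℂ] lp (fun _ : G => H) 2)) : Prop :=
  ∀ (a : A) (s : G), Φ (piRep ι α a * lam s) = piRep ι α (F s a) * lam s

/-- `Φ` maps the reduced crossed product into itself and, on matrices over the reduced
crossed product, all amplifications of `Φ` are bounded by `C`. -/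
def CBBoundOnCrossed (ι : A →⋆ₙₐ[ℂ] (H →L[ℂ] H)) (α : G → A ≃⋆ₐ[ℂ] A)
    (Φ : (lp (fun _ : G => H) 2 →L[ℂ] lp (fun _ : G => H) 2) →ₗ[ℂ]
         (lp (fun _ : G => H) 2 →L[ℂ] lp (fun _ : G => H) 2)) (C : ℝ) : Prop :=
  ∀ (n : ℕ) (M : Matrix (Fin n) (Fin n)
      (lp (fun _ : G => H) 2 →L[ℂ] lp (fun _ : G => H) 2)),
    (∀ i j, M i j ∈ CrossedSet ι α) →
      ‖matOp (M.map Φ)‖ ≤ C * ‖matOp M‖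

/-- `Φ` is completely positive on the reduced crossed product: matrices over the crossed
product which are positive are mapped to positive matrices. -/
def CPOnCrossed (ι : A →⋆ₙₐ[ℂ] (H →L[ℂ] H)) (α : G → A ≃⋆ₐ[ℂ] A)
    (Φ : (lp (fun _ : G => H) 2 →L[ℂ] lp (fun _ : G => H) 2) →ₗ[ℂ]
         (lp (fun _ : G => H) 2 →L[ℂ] lp (fun _ : G => H) 2)) : Prop :=
  (∀ x ∈ CrossedSet ι α, Φ x ∈ CrossedSet ι α) ∧
  ∀ (n : ℕ) (M : Matrix (Fin n) (Fin n)
      (lp (fun _ : G => H) 2 →L[ℂ] lp (fun _ : G => H) 2)),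
    (∀ i j, M i j ∈ CrossedSet ι α) → MatPos M → MatPos (M.map Φ)

/-- `F : G → CB(A)` is a Herz-Schur `(A,G,α)`-multiplier: the map `S_F` determined by
`S_F(π(a)λ_s) = π(F(s)(a))λ_s` extends to a completely bounded map on `A ⋊_{α,r} G`. -/
def IsHerzSchurMultiplier (ι : A →⋆ₙₐ[ℂ] (H →L[ℂ] H)) (α : G → A ≃⋆ₐ[ℂ] A)
    (F : G → (A →ₗ[ℂ] A)) : Prop :=
  ∃ Φ, HSGenProp ι α F Φ ∧ (∀ x ∈ CrossedSet ι α, Φ x ∈ CrossedSet ι α) ∧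
    ∃ C : ℝ, 0 ≤ C ∧ CBBoundOnCrossed ι α Φ C

/-- `F : G → CB(A)` is a completely positive Herz-Schur `(A,G,α)`-multiplier: the map
`S_F` extends to a completely positive (hence completely bounded) map on `A ⋊_{α,r} G`. -/
def IsHerzSchurMultiplierCP (ι : A →⋆ₙₐ[ℂ] (H →L[ℂ] H)) (α : G → A ≃⋆ₐ[ℂ] A)
    (F : G → (A →ₗ[ℂ] A)) : Prop :=
  ∃ Φ, HSGenProp ι α F Φ ∧ CPOnCrossed ι α Φ ∧
    ∃ C : ℝ, 0 ≤ C ∧ CBBoundOnCrossed ι α Φ C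

/-- The function `N(F) : G × G → CB(A)`, `N(F)(s,t)(a) = α_{s⁻¹}(F(st⁻¹)(α_s(a)))`. -/
def NF (α : G → A ≃⋆ₐ[ℂ] A) (F : G → (A →ₗ[ℂ] A)) : G → G → (A →ₗ[ℂ] A) :=
  fun s t => (autLin (α s⁻¹)) ∘ₗ (F (s * t⁻¹)) ∘ₗ (autLin (α s))

end Dynamics

section Trace

variable {A : Type*} [NonUnitalCStarAlgebra A]

/-- `τ` is a positive linear functional. -/
def IsPositiveFunctional (τ : A →ₗ[ℂ] ℂ) : Prop :=
  ∀ a : A, 0 ≤ τ (star a * a)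

/-- `τ` is tracial. -/
def IsTracial (τ : A →ₗ[ℂ] ℂ) : Prop :=
  ∀ a b : A, τ (a * b) = τ (b * a)

/-- `τ` is faithful. -/
def IsFaithfulFunctional (τ : A →ₗ[ℂ] ℂ) : Prop :=
  ∀ a : A, τ (star a * a) = 0 → a = 0

/-- The `L²`-norm `‖a‖_{2,τ} = τ(a*a)^{1/2}` associated with a positive functional `τ`. -/
def l2norm (τ : A →ₗ[ℂ] ℂ) (a : A) : ℝ :=
  Real.sqrt (τ (star a * a)).re

/-- A map `Φ : A → A` is `L²`-bounded by `C` with respect to `τ`. -/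
def L2BoundedBy (τ : A →ₗ[ℂ] ℂ) (Φ : A →ₗ[ℂ] A) (C : ℝ) : Prop :=
  ∀ a : A, l2norm τ (Φ a) ≤ C * l2norm τ a

/-- A map `Φ : A → A` is `L²`-bounded with respect to `τ`, i.e. it extends to a bounded
operator `T_Φ` on `L²(A,τ)`. -/
def L2Bounded (τ : A →ₗ[ℂ] ℂ) (Φ : A →ₗ[ℂ] A) : Prop :=
  ∃ C : ℝ, 0 ≤ C ∧ L2BoundedBy τ Φ C

/-- The norm of the extension `T_Φ` of `Φ` to `L²(A,τ)`. -/
def l2OpNorm (τ : A →ₗ[ℂ] ℂ) (Φ : A →ₗ[ℂ] A) : ℝ :=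
  sInf { C : ℝ | 0 ≤ C ∧ L2BoundedBy τ Φ C }

/-- `Φ` is `L²`-compact with respect to `τ`: the image under `Φ` of the `L²`-unit ball of
`A` is totally bounded in the `L²`-norm; equivalently, the extension `T_Φ` of `Φ` to
`L²(A,τ)` is a compact operator. -/
def L2Compact (τ : A →ₗ[ℂ] ℂ) (Φ : A →ₗ[ℂ] A) : Prop :=
  ∀ ε : ℝ, 0 < ε → ∃ S : Finset A, ∀ a : A, l2norm τ a ≤ 1 →
    ∃ b ∈ S, l2norm τ (Φ a - b) < ε

end Trace

section Props

variable {A : Type*} [CStarAlgebra A]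

/-- The pair `(A,τ)` has the C*-algebra Haagerup property (Definition 3.1, Dong). -/
def CStarHaagerup (τ : A →ₗ[ℂ] ℂ) : Prop :=
  ∃ (I : Type) (_ : Nonempty I) (_ : SemilatticeSup I) (Φ : I → (A →ₗ[ℂ] A)),
    (∀ i, Φ i 1 = 1) ∧
    (∀ i, IsCompletelyPositive (Φ i)) ∧
    (∀ i (a : A), τ (Φ i (star a * a)) ≤ τ (star a * a)) ∧
    (∀ i, L2Compact τ (Φ i)) ∧
    (∀ a : A, Filter.Tendsto (fun i => l2norm τ (Φ i a - a)) Filter.atTop (nhds 0))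

/-- `A` is a nuclear C*-algebra: there is a net of finite-rank completely positive
contractions converging to the identity in the point-norm topology. -/
def NuclearCStarAlgebra (A : Type*) [NonUnitalCStarAlgebra A] : Prop :=
  ∃ (I : Type) (_ : Nonempty I) (_ : SemilatticeSup I) (Φ : I → (A →ₗ[ℂ] A)),
    (∀ i, IsCompletelyPositive (Φ i)) ∧
    (∀ i (a : A), ‖Φ i a‖ ≤ ‖a‖) ∧
    (∀ i, FiniteDimensional ℂ (LinearMap.range (Φ i))) ∧
    (∀ a : A, Filter.Tendsto (fun i => ‖Φ i a - a‖) Filter.atTop (nhds 0))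

/-- A discrete group `G` has the Haagerup property: there is a net of normalised
positive-definite functions on `G`, vanishing at infinity, converging pointwise to `1`. -/
def GroupHaagerup (G : Type*) [Group G] : Prop :=
  ∃ (I : Type) (_ : Nonempty I) (_ : SemilatticeSup I) (φ : I → G → ℂ),
    (∀ i, φ i 1 = 1) ∧
    (∀ i (n : ℕ) (s : Fin n → G) (μ : Fin n → ℂ),
      0 ≤ ∑ k, ∑ l, (starRingEnd ℂ) (μ k) * φ i ((s k)⁻¹ * s l) * μ l) ∧
    (∀ i, ∀ ε : ℝ, 0 < ε → ∃ S : Finset G, ∀ s ∉ S, ‖φ i s‖ ≤ ε) ∧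
    (∀ s : G, Filter.Tendsto (fun i => φ i s) Filter.atTop (nhds 1))

end Props

section More

variable {A : Type*} [NonUnitalCStarAlgebra A]

/-- A star homomorphism, as a `ℂ`-linear map. -/
def iotaLin {B : Type*} [NonUnitalCStarAlgebra B] (ι : A →⋆ₙₐ[ℂ] B) : A →ₗ[ℂ] B :=
  { toFun := ι
    map_add' := fun a b => map_add ι a b
    map_smul' := fun c a => map_smul ι c a }

/-- A function `φ : X × X → CB(A)` with values in the maps on `A` is of positive type. -/
def PositiveTypeA (φ : X → X → (A →ₗ[ℂ] A)) : Prop :=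
  ∀ (m : ℕ) (x : Fin m → X) (a : Matrix (Fin m) (Fin m) A),
    MatPos a → MatPos (Matrix.of fun p q => φ (x p) (x q) (a p q))

/-- The representation `π` of `A` on `ℓ²(G,H)`, as a linear map. -/
def piRepLin (ι : A →⋆ₙₐ[ℂ] (H →L[ℂ] H)) (α : G → A ≃⋆ₐ[ℂ] A) :
    A →ₗ[ℂ] (lp (fun _ : G => H) 2 →L[ℂ] lp (fun _ : G => H) 2) :=
  { toFun := piRep ι α
    map_add' := fun a b => by
      apply ContinuousLinearMap.ext; intro f
      apply lp.ext; funext s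
      have h1 : (((piRep ι α a + piRep ι α b) f :
          lp (fun _ : G => H) 2) : ∀ _ : G, H) s
          = ((piRep ι α a f : ∀ _ : G, H) s) + ((piRep ι α b f : ∀ _ : G, H) s) := by
        rw [ContinuousLinearMap.add_apply]
        exact congrFun (lp.coeFn_add (piRep ι α a f) (piRep ι α b f)) s
      show ι (α s⁻¹ (a + b)) (f s) = _
      rw [h1]
      show _ = ι (α s⁻¹ a) (f s) + ι (α s⁻¹ b) (f s)
      rw [map_add (α s⁻¹), map_add ι, ContinuousLinearMap.add_apply]
    map_smul' := fun c a => by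
      apply ContinuousLinearMap.ext; intro f
      apply lp.ext; funext s
      have h1 : (((c • piRep ι α a) f :
          lp (fun _ : G => H) 2) : ∀ _ : G, H) s
          = c • ((piRep ι α a f : ∀ _ : G, H) s) := by
        rw [ContinuousLinearMap.smul_apply]
        exact congrFun (lp.coeFn_smul c (piRep ι α a f)) s
      show ι (α s⁻¹ (c • a)) (f s) = _
      rw [RingHom.id_apply, h1]
      show _ = c • ι (α s⁻¹ a) (f s)
      rw [map_smul (α s⁻¹), map_smul ι, ContinuousLinearMap.smul_apply] }

/-- The completely bounded norm of a map defined on the reduced crossed product. -/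
def cbNormOnCrossed (ι : A →⋆ₙₐ[ℂ] (H →L[ℂ] H)) (α : G → A ≃⋆ₐ[ℂ] A)
    (Φ : (lp (fun _ : G => H) 2 →L[ℂ] lp (fun _ : G => H) 2) →ₗ[ℂ]
         (lp (fun _ : G => H) 2 →L[ℂ] lp (fun _ : G => H) 2)) : ℝ :=
  sInf { C : ℝ | 0 ≤ C ∧ CBBoundOnCrossed ι α Φ C }

/-- The `L²`-norm `‖x‖_{2,τ'}` on the reduced crossed product induced by the trace
`τ' = τ ∘ E`. -/
def l2normCr (τ : A →ₗ[ℂ] ℂ)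
    (E : (lp (fun _ : G => H) 2 →L[ℂ] lp (fun _ : G => H) 2) →ₗ[ℂ] A)
    (x : lp (fun _ : G => H) 2 →L[ℂ] lp (fun _ : G => H) 2) : ℝ :=
  Real.sqrt (τ (E (star x * x))).re

/-- The map `h_Φ : G → CB(A)` associated with a map `Φ` on the reduced crossed product:
`h_Φ(s)(a) = E(Φ(π(a)λ_s)λ_s*)`. -/
def hMap (ι : A →⋆ₙₐ[ℂ] (H →L[ℂ] H)) (α : G → A ≃⋆ₐ[ℂ] A)
    (E : (lp (fun _ : G => H) 2 →L[ℂ] lp (fun _ : G => H) 2) →ₗ[ℂ] A)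
    (Φ : (lp (fun _ : G => H) 2 →L[ℂ] lp (fun _ : G => H) 2) →ₗ[ℂ]
         (lp (fun _ : G => H) 2 →L[ℂ] lp (fun _ : G => H) 2))
    (s : G) : A →ₗ[ℂ] A :=
  E ∘ₗ (LinearMap.mulRight ℂ (star (lam s))) ∘ₗ Φ ∘ₗ
    (LinearMap.mulRight ℂ (lam (H := H) s)) ∘ₗ piRepLin ι α

end More

section BigProps

open Filter

variable {A : Type*} [CStarAlgebra A]

/-- The Haagerup property for the `C*`-dynamical system `(A,G,α,τ)` (Definition 3.3). -/
def DynHaagerup (ι : A →⋆ₙₐ[ℂ] (H →L[ℂ] H)) (α : G → A ≃⋆ₐ[ℂ] A)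
    (τ : A →ₗ[ℂ] ℂ) : Prop :=
  ∃ (I : Type) (_ : Nonempty I) (_ : SemilatticeSup I) (F : I → G → (A →ₗ[ℂ] A)),
    (∀ i, IsHerzSchurMultiplierCP ι α (F i)) ∧
    (∀ i, F i 1 1 = 1) ∧
    (∀ i (a : A), τ (F i 1 (star a * a)) ≤ τ (star a * a)) ∧
    (∀ i (t : G), L2Compact τ (F i t)) ∧
    (∀ i, ∀ ε : ℝ, 0 < ε → ∃ S : Finset G, ∀ s ∉ S, l2OpNorm τ (F i s) ≤ ε) ∧
    (∀ (t : G) (a : A),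
      Tendsto (fun i => l2norm τ (F i t a - a)) atTop (nhds 0))

/-- The C*-algebra Haagerup property for the reduced crossed product `A ⋊_{α,r} G`
endowed with the induced trace `τ' = τ ∘ E` (Definition 3.1). -/
def CrossedCStarHaagerup (ι : A →⋆ₙₐ[ℂ] (H →L[ℂ] H)) (α : G → A ≃⋆ₐ[ℂ] A)
    (τ : A →ₗ[ℂ] ℂ)
    (E : (lp (fun _ : G => H) 2 →L[ℂ] lp (fun _ : G => H) 2) →ₗ[ℂ] A) : Prop :=
  ∃ (I : Type) (_ : Nonempty I) (_ : SemilatticeSup I)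
    (Φ : I → ((lp (fun _ : G => H) 2 →L[ℂ] lp (fun _ : G => H) 2) →ₗ[ℂ]
              (lp (fun _ : G => H) 2 →L[ℂ] lp (fun _ : G => H) 2))),
    (∀ i, Φ i 1 = 1) ∧
    (∀ i, CPOnCrossed ι α (Φ i)) ∧
    (∀ i, ∀ x ∈ CrossedSet ι α, τ (E (Φ i (star x * x))) ≤ τ (E (star x * x))) ∧
    (∀ i, ∀ ε : ℝ, 0 < ε →
      ∃ S : Finset (lp (fun _ : G => H) 2 →L[ℂ] lp (fun _ : G => H) 2),
        ∀ x ∈ CrossedSet ι α, l2normCr τ E x ≤ 1 →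
          ∃ b ∈ S, l2normCr τ E (Φ i x - b) < ε) ∧
    (∀ x ∈ CrossedSet ι α,
      Tendsto (fun i => l2normCr τ E (Φ i x - x)) atTop (nhds 0))

end BigProps

section Nuc

open Filter

variable {A : Type*} [NonUnitalCStarAlgebra A]

/-- Nuclearity of the reduced crossed product `A ⋊_{α,r} G`: there is a net of
finite-rank completely positive contractions on it converging to the identity in the
point-norm topology. -/
def CrossedNuclear (ι : A →⋆ₙₐ[ℂ] (H →L[ℂ] H)) (α : G → A ≃⋆ₐ[ℂ] A) : Prop :=
  ∃ (I : Type) (_ : Nonempty I) (_ : SemilatticeSup I)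
    (Φ : I → ((lp (fun _ : G => H) 2 →L[ℂ] lp (fun _ : G => H) 2) →ₗ[ℂ]
              (lp (fun _ : G => H) 2 →L[ℂ] lp (fun _ : G => H) 2))),
    (∀ i, CPOnCrossed ι α (Φ i)) ∧
    (∀ i, ∀ x ∈ CrossedSet ι α, ‖Φ i x‖ ≤ ‖x‖) ∧
    (∀ i, FiniteDimensional ℂ
      (Submodule.span ℂ ((fun x => Φ i x) '' CrossedSet ι α))) ∧
    (∀ x ∈ CrossedSet ι α, Tendsto (fun i => ‖Φ i x - x‖) atTop (nhds 0))

/-- Nuclearity of the `C*`-dynamical system `(A,G,α)` (Definition 4.2): a net of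
completely positive, finitely supported Herz-Schur multipliers, with `‖F_i(e)‖_cb ≤ 1`,
with finite-rank values, converging to the identity pointwise in norm. -/
def DynNuclear (ι : A →⋆ₙₐ[ℂ] (H →L[ℂ] H)) (α : G → A ≃⋆ₐ[ℂ] A) : Prop :=
  ∃ (I : Type) (_ : Nonempty I) (_ : SemilatticeSup I) (F : I → G → (A →ₗ[ℂ] A)),
    (∀ i, IsHerzSchurMultiplierCP ι α (F i)) ∧
    (∀ i, (Function.support (F i)).Finite) ∧
    (∀ i, CBBound (fun a => ι a) (fun a => ι a) (F i 1) 1) ∧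
    (∀ i (s : G), FiniteDimensional ℂ (LinearMap.range (F i s))) ∧
    (∀ (s : G) (a : A), Tendsto (fun i => ‖F i s a - a‖) atTop (nhds 0))

end Nuc

section Amen

open Filter

variable {A : Type*} [CStarAlgebra A]

/-- Amenability of the action `α` of a discrete group `G` on a unital C*-algebra `A`
(Definition 4.5): a net of finitely supported functions `T_i : G → Z(A)⁺` with
`Σ_s T_i(s)² = 1` and `‖Σ_s (T_i(s) - α_t(T_i(t⁻¹s)))*(T_i(s) - α_t(T_i(t⁻¹s)))‖ → 0`. -/
def AmenableAction {G : Type*} [Group G] (α : G → A ≃⋆ₐ[ℂ] A) : Prop :=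
  ∃ (I : Type) (_ : Nonempty I) (_ : SemilatticeSup I) (T : I → G → A),
    (∀ i, (Function.support (T i)).Finite) ∧
    (∀ i (s : G) (c : A), Commute (T i s) c) ∧
    (∀ i (s : G), ∃ b : A, T i s = star b * b) ∧
    (∀ i, ∑ᶠ s : G, T i s * T i s = 1) ∧
    (∀ t : G, Tendsto (fun i =>
        ‖∑ᶠ s : G, star (T i s - α t (T i (t⁻¹ * s))) *
          (T i s - α t (T i (t⁻¹ * s)))‖) atTop (nhds 0))

end Amen

universe u v w

/-- Data for a Stinespring-type representation of an operator-valued function on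
`X × X`: a Hilbert space `K`, a *-representation `ρ : A → B(K)` and
families of operators `V, W : X → B(H,K)`. -/
structure OpValuedRep (A : Type u) [NonUnitalCStarAlgebra A]
    (H : Type v) [NormedAddCommGroup H] [InnerProductSpace ℂ H] [CompleteSpace H]
    (X : Type w) where
  /-- the Hilbert space of the representation -/
  K : Type (max u v w)
  [nacg : NormedAddCommGroup K]
  [ips : InnerProductSpace ℂ K]
  [cpl : CompleteSpace K]
  /-- the representation -/
  ρ : A →⋆ₙₐ[ℂ] (K →L[ℂ] K)
  /-- the left family of operators -/
  V : X → (H →L[ℂ] K)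
  /-- the right family of operators -/
  W : X → (H →L[ℂ] K)

attribute [instance] OpValuedRep.nacg OpValuedRep.ips OpValuedRep.cpl

end
noncomputable section
open scoped ComplexOrder ENNReal
open Matrix

set_option linter.unusedSectionVars false

section HSGeneric

theorem hs_exists_sqrt {L : Type*} [NormedAddCommGroup L] [InnerProductSpace ℂ L]
    [CompleteSpace L] (T : L →L[ℂ] L) (h : 0 ≤ T) : ∃ S : L →L[ℂ] L, T = star S * S :=
  CStarAlgebra.nonneg_iff_eq_star_mul_self.1 h

variable {K : Type*} [NormedAddCommGroup K] [InnerProductSpace ℂ K] [CompleteSpace K]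

/-- sesquilinear form of an operator matrix -/
def hsForm {ν : Type*} [Fintype ν] (M : Matrix ν ν (K →L[ℂ] K)) (η ξ : ν → K) : ℂ :=
  ∑ i, ∑ j, inner ℂ (η i) (M i j (ξ j))

/-- form positivity -/
def HsPos {ν : Type*} [Fintype ν] (M : Matrix ν ν (K →L[ℂ] K)) : Prop :=
  ∀ ξ : ν → K, 0 ≤ hsForm M ξ ξ

/-- form boundedness -/
def HsBd {ν : Type*} [Fintype ν] (M : Matrix ν ν (K →L[ℂ] K)) (D : ℝ) : Prop :=
  ∀ η ξ : ν → K, ‖hsForm M η ξ‖ ≤ D * ((∑ i, ‖η i‖ ^ 2 + ∑ i, ‖ξ i‖ ^ 2) / 2)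

theorem hsForm_matOp {ν : Type*} [Fintype ν] (M : Matrix ν ν (K →L[ℂ] K))
    (η ξ : PiLp 2 (fun _ : ν => K)) :
    inner ℂ η (matOp M ξ) = hsForm M η.ofLp ξ.ofLp := by
  rw [PiLp.inner_apply]
  unfold hsForm
  refine Finset.sum_congr rfl fun i _ => ?_
  rw [← inner_sum]
  congr 1
  simp [matOp]

theorem HsPos.of_matPos {ν : Type*} [Fintype ν] {M : Matrix ν ν (K →L[ℂ] K)}
    (h : MatPos M) : HsPos M := by
  obtain ⟨N, rfl⟩ := h
  intro ξ
  have : hsForm (Nᴴ * N) ξ ξ = ∑ k, inner ℂ (∑ i, N k i (ξ i)) (∑ i, N k i (ξ i)) := by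
    unfold hsForm
    simp only [Matrix.mul_apply, Matrix.conjTranspose_apply, _root_.sum_apply,
      inner_sum, sum_inner, mul_apply_eq_comp,
      ContinuousLinearMap.star_eq_adjoint, ContinuousLinearMap.adjoint_inner_right]
    rw [Finset.sum_congr rfl fun i _ => Finset.sum_comm, Finset.sum_comm]
    refine Finset.sum_congr rfl fun k _ => ?_
    rw [Finset.sum_comm]
  rw [this]
  refine Finset.sum_nonneg fun k _ => ?_
  rw [inner_self_eq_norm_sq_to_K]
  rw [← RCLike.ofReal_pow]
  exact RCLike.ofReal_nonneg.2 (sq_nonneg _)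

theorem HsPos.matPos {ν : Type*} [Fintype ν] {M : Matrix ν ν (K →L[ℂ] K)}
    (h : HsPos M) : MatPos M := by
  classical
  have h1 : (0 : PiLp 2 (fun _ : ν => K) →L[ℂ] PiLp 2 (fun _ : ν => K)) ≤ matOp M := by
    rw [ContinuousLinearMap.nonneg_iff_isPositive, ContinuousLinearMap.isPositive_iff_complex]
    intro ξ
    have := h ξ.ofLp
    rw [← hsForm_matOp] at this
    have h2 : 0 ≤ inner ℂ (matOp M ξ) ξ := by
      rw [← inner_conj_symm]
      exact star_nonneg_iff.2 this
    rw [Complex.le_def] at h2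
    refine ⟨?_, h2.1⟩
    apply Complex.ext
    · simp
    · simpa using h2.2
  obtain ⟨S, hS⟩ := hs_exists_sqrt _ h1
  let sg : ν → (K →L[ℂ] PiLp 2 (fun _ : ν => K)) := fun j =>
    ((PiLp.continuousLinearEquiv 2 ℂ (fun _ : ν => K)).symm :
      (∀ _ : ν, K) →L[ℂ] PiLp 2 (fun _ : ν => K)) ∘L
      (ContinuousLinearMap.single ℂ (fun _ : ν => K) j)
  let N : Matrix ν ν (K →L[ℂ] K) := fun k j =>
    (PiLp.proj 2 (fun _ : ν => K) k : PiLp 2 (fun _ : ν => K) →L[ℂ] K) ∘L S ∘L sg j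
  refine ⟨N, ?_⟩
  ext i j ξ
  refine ext_inner_left ℂ fun η => ?_
  have e1 : inner ℂ η (M i j ξ) = inner ℂ (sg i η) (matOp M (sg j ξ)) := by
    rw [hsForm_matOp]
    unfold hsForm
    rw [Finset.sum_eq_single i, Finset.sum_eq_single j]
    · simp [sg]
    · intro b _ hb; simp [sg, hb]
    · simp
    · intro b _ hb; simp [sg, hb]
    · simp
  rw [e1, hS, mul_apply_eq_comp, ContinuousLinearMap.star_eq_adjoint,
    ContinuousLinearMap.adjoint_inner_right, PiLp.inner_apply]
  simp only [Matrix.mul_apply, Matrix.conjTranspose_apply, _root_.sum_apply,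
      inner_sum, mul_apply_eq_comp,
      ContinuousLinearMap.star_eq_adjoint, ContinuousLinearMap.adjoint_inner_right]
  rfl

theorem HsBd.matOp {ν : Type*} [Fintype ν] (M : Matrix ν ν (K →L[ℂ] K)) :
    HsBd M ‖matOp M‖ := by
  intro η ξ
  have h := hsForm_matOp M (WithLp.toLp 2 η) (WithLp.toLp 2 ξ)
  have h' : hsForm M η ξ = inner ℂ (WithLp.toLp 2 η) (_root_.matOp M (WithLp.toLp 2 ξ)) := h.symm
  have n1 : ∑ i, ‖η i‖ ^ 2 = ‖(WithLp.toLp 2 η : PiLp 2 (fun _ : ν => K))‖ ^ 2 := by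
    rw [PiLp.norm_sq_eq_of_L2]
  have n2 : ∑ i, ‖ξ i‖ ^ 2 = ‖(WithLp.toLp 2 ξ : PiLp 2 (fun _ : ν => K))‖ ^ 2 := by
    rw [PiLp.norm_sq_eq_of_L2]
  rw [h', n1, n2]
  set a : PiLp 2 (fun _ : ν => K) := WithLp.toLp 2 η
  set b : PiLp 2 (fun _ : ν => K) := WithLp.toLp 2 ξ
  calc _ ≤ ‖a‖ * ‖_root_.matOp M b‖ := norm_inner_le_norm _ _
    _ ≤ ‖a‖ * (‖_root_.matOp M‖ * ‖b‖) := by gcongr; exact (_root_.matOp M).le_opNorm b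
    _ = ‖_root_.matOp M‖ * (‖a‖ * ‖b‖) := by ring
    _ ≤ _ := by gcongr; nlinarith [sq_nonneg (‖a‖ - ‖b‖)]

/-- AM-GM form bounds imply operator norm bounds -/
theorem hs_opNorm_le {L : Type*} [NormedAddCommGroup L] [InnerProductSpace ℂ L]
    (T : L →L[ℂ] L) {D : ℝ} (hD : 0 ≤ D)
    (h : ∀ η ξ, ‖inner ℂ η (T ξ)‖ ≤ D * ((‖η‖ ^ 2 + ‖ξ‖ ^ 2) / 2)) : ‖T‖ ≤ D := by
  refine T.opNorm_le_bound hD fun ξ => ?_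
  by_cases h0 : ‖T ξ‖ = 0
  · rw [h0]; positivity
  have hp : 0 < ‖T ξ‖ := lt_of_le_of_ne (norm_nonneg _) (Ne.symm h0)
  have := h (((‖ξ‖ / ‖T ξ‖ : ℝ) : ℂ) • T ξ) ξ
  rw [inner_smul_left, norm_mul, norm_smul, inner_self_eq_norm_sq_to_K] at this
  simp only [RCLike.norm_conj, Complex.norm_real, norm_div, norm_norm, norm_pow,
    Complex.coe_algebraMap] at this
  rw [div_mul_cancel₀ _ h0] at this
  have e : ‖ξ‖ / ‖T ξ‖ * ‖T ξ‖ ^ 2 = ‖ξ‖ * ‖T ξ‖ := by field_simp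
  rw [e] at this
  by_cases h1 : ‖ξ‖ = 0
  · rw [norm_eq_zero] at h1; subst h1; simp
  have hp1 : 0 < ‖ξ‖ := lt_of_le_of_ne (norm_nonneg _) (Ne.symm h1)
  have : ‖ξ‖ * ‖T ξ‖ ≤ ‖ξ‖ * (D * ‖ξ‖) := by nlinarith
  exact le_of_mul_le_mul_left this hp1

theorem HsBd.norm_le {ν : Type*} [Fintype ν] {M : Matrix ν ν (K →L[ℂ] K)} {D : ℝ}
    (hD : 0 ≤ D) (h : HsBd M D) : ‖_root_.matOp M‖ ≤ D := by
  refine hs_opNorm_le _ hD fun η ξ => ?_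
  rw [hsForm_matOp, PiLp.norm_sq_eq_of_L2, PiLp.norm_sq_eq_of_L2]
  exact h _ _

/-- CP for arbitrary finite index types, in terms of forms -/
theorem hs_cp_forms (𝒞 : Set (K →L[ℂ] K)) (Φ : (K →L[ℂ] K) →ₗ[ℂ] (K →L[ℂ] K))
    (hΦ : ∀ (n : ℕ) (M : Matrix (Fin n) (Fin n) (K →L[ℂ] K)),
      (∀ i j, M i j ∈ 𝒞) → MatPos M → MatPos (M.map Φ))
    {ν : Type*} [Fintype ν] (M : Matrix ν ν (K →L[ℂ] K)) (hM : ∀ i j, M i j ∈ 𝒞)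
    (hp : HsPos M) : HsPos (M.map Φ) := by
  let e := Fintype.equivFin ν
  have key : ∀ (N : Matrix ν ν (K →L[ℂ] K)) (η ξ : Fin (Fintype.card ν) → K),
      hsForm (N.submatrix e.symm e.symm) η ξ = hsForm N (η ∘ e) (ξ ∘ e) := by
    intro N η ξ
    unfold hsForm
    rw [← e.sum_comp]
    refine Finset.sum_congr rfl fun i _ => ?_
    rw [← e.sum_comp]
    simp
  have h1 := hΦ _ (M.submatrix e.symm e.symm) (fun i j => hM _ _)
    (HsPos.matPos (fun ξ => by rw [key]; exact hp _))
  intro ξ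
  have h2 := HsPos.of_matPos h1 (ξ ∘ e.symm)
  rw [← Matrix.submatrix_map, key] at h2
  simpa [Function.comp_assoc] using h2

theorem hs_scalar (a d : ℝ) (b c : ℂ)
    (h : ∀ z : ℂ, ‖z‖ = 1 → 0 ≤ (a : ℂ) + d + star z * b + z * c) : ‖b‖ ≤ (a + d) / 2 := by
  have h1 := (Complex.le_def.1 (h 1 (by simp))).2
  have h2 := (Complex.le_def.1 (h Complex.I (by simp))).2
  simp at h1 h2
  have hc : c = star b := by
    apply Complex.ext
    · simp; linarith
    · simp; linarith
  obtain ⟨z, hz, hzb⟩ := Complex.exists_norm_eq_mul_self b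
  have h3 := (Complex.le_def.1 (h (- star z) (by simpa using hz))).1
  have e2 : - star z * star b = - (‖b‖ : ℂ) := by
    rw [neg_mul, ← star_mul', ← hzb]; simp
  have e1 : star (- star z) * b = - (‖b‖ : ℂ) := by
    rw [star_neg, star_star, neg_mul, ← hzb]
  rw [hc, e1, e2] at h3
  simp at h3
  linarith

end HSGeneric
end
noncomputable section
open scoped ComplexOrder ENNReal
open Matrix
set_option linter.unusedSectionVars false

universe v

section HSCB

variable {K : Type*} [NormedAddCommGroup K] [InnerProductSpace ℂ K] [CompleteSpace K]

theorem hs_pos_bounded_aux {R : Type*} [NonUnitalCStarAlgebra R]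
    (f : R →ₗ[ℂ] (K →L[ℂ] K)) (hf : ∀ x : R, 0 ≤ f (star x * x)) :
    ∃ C : ℝ, 0 ≤ C ∧ ∀ x, ‖f x‖ ≤ C * ‖x‖ := by
  let : PartialOrder R := CStarAlgebra.spectralOrder R
  have : StarOrderedRing R := CStarAlgebra.spectralOrderedRing R
  have hf : ∀ x : R, 0 ≤ x → 0 ≤ f x := by
    intro x hx
    obtain ⟨y, rfl⟩ := CStarAlgebra.nonneg_iff_eq_star_mul_self.1 hx
    exact hf y
  obtain ⟨C, hC⟩ := PositiveLinearMap.exists_norm_apply_le (PositiveLinearMap.mk₀ f hf)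
  exact ⟨C, C.2, hC⟩

theorem hs_pos_bounded (𝒞 : NonUnitalStarSubalgebra ℂ (K →L[ℂ] K)) [IsClosed (𝒞 : Set (K →L[ℂ] K))]
    (Φ : (K →L[ℂ] K) →ₗ[ℂ] (K →L[ℂ] K))
    (hΦ : ∀ x ∈ 𝒞, 0 ≤ Φ (star x * x)) :
    ∃ C : ℝ, 0 ≤ C ∧ ∀ x ∈ 𝒞, ‖Φ x‖ ≤ C * ‖x‖ := by
  let f : 𝒞 →ₗ[ℂ] (K →L[ℂ] K) :=
    { toFun := fun x => Φ x
      map_add' := fun x y => by simp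
      map_smul' := fun c x => by simp }
  obtain ⟨C, hC0, hC⟩ := hs_pos_bounded_aux f (fun x => hΦ x x.2)
  exact ⟨C, hC0, fun x hx => hC ⟨x, hx⟩⟩

theorem hs_approx_unit (𝒞 : NonUnitalStarSubalgebra ℂ (K →L[ℂ] K))
    [IsClosed (𝒞 : Set (K →L[ℂ] K))] :
    ∃ l : Filter 𝒞, l.NeBot ∧ (∀ m : 𝒞, Filter.Tendsto (fun x => m * x) l (nhds m)) ∧
      (∀ m : 𝒞, Filter.Tendsto (fun x => x * m) l (nhds m)) ∧
      (∀ᶠ x in l, ‖x‖ ≤ 1) ∧ (∀ᶠ x in l, star x = x) := by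
  let : PartialOrder 𝒞 := CStarAlgebra.spectralOrder 𝒞
  let : StarOrderedRing 𝒞 := CStarAlgebra.spectralOrderedRing 𝒞
  have h := CStarAlgebra.increasingApproximateUnit 𝒞
  exact ⟨_, h.neBot, h.tendsto_mul_left, h.tendsto_mul_right, h.eventually_norm,
    h.eventually_star_eq⟩

theorem hsForm_fromBlocks {ν : Type*} [Fintype ν] (A B C D : Matrix ν ν (K →L[ℂ] K))
    (η ξ : ν → K) : hsForm (Matrix.fromBlocks A B C D) (Sum.elim η ξ) (Sum.elim η ξ)
      = hsForm A η η + hsForm D ξ ξ + hsForm B η ξ + hsForm C ξ η := by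
  unfold hsForm
  simp only [Fintype.sum_sum_type, Sum.elim_inl, Sum.elim_inr, Matrix.fromBlocks_apply₁₁,
    Matrix.fromBlocks_apply₁₂, Matrix.fromBlocks_apply₂₁, Matrix.fromBlocks_apply₂₂,
    Finset.sum_add_distrib]
  ring

theorem hsForm_smul_smul {ν : Type*} [Fintype ν] (A : Matrix ν ν (K →L[ℂ] K))
    (z w : ℂ) (η ξ : ν → K) : hsForm A (z • η) (w • ξ) = star z * w * hsForm A η ξ := by
  unfold hsForm
  simp only [Finset.mul_sum, Pi.smul_apply, map_smul, inner_smul_left, inner_smul_right]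
  refine Finset.sum_congr rfl fun i _ => Finset.sum_congr rfl fun j _ => ?_
  simp only [starRingEnd_apply]; ring

theorem hsForm_diagonal {ν : Type*} [Fintype ν] [DecidableEq ν] (T : K →L[ℂ] K) (η ξ : ν → K) :
    hsForm (Matrix.diagonal fun _ : ν => T) η ξ = ∑ i, inner ℂ (η i) (T (ξ i)) := by
  unfold hsForm
  refine Finset.sum_congr rfl fun i _ => ?_
  rw [Finset.sum_eq_single i]
  · simp
  · intro j _ hj; simp [Matrix.diagonal_apply_ne _ hj.symm]
  · simp

theorem hs_cb (𝒞 : NonUnitalStarSubalgebra ℂ (K →L[ℂ] K)) [IsClosed (𝒞 : Set (K →L[ℂ] K))]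
    (Φ : (K →L[ℂ] K) →ₗ[ℂ] (K →L[ℂ] K))
    (hΦ : ∀ (n : ℕ) (M : Matrix (Fin n) (Fin n) (K →L[ℂ] K)),
      (∀ i j, M i j ∈ 𝒞) → MatPos M → MatPos (M.map Φ)) :
    ∃ C : ℝ, 0 ≤ C ∧ ∀ (ν : Type v) [Fintype ν] (M : Matrix ν ν (K →L[ℂ] K)) (D : ℝ),
      (∀ i j, M i j ∈ 𝒞) → 0 ≤ D → HsBd M D → HsBd (M.map Φ) (C * D) := by
  classical
  obtain ⟨C, hC0, hC⟩ := hs_pos_bounded 𝒞 Φ (by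
    intro x hx
    have := hΦ 1 (Matrix.of fun _ _ => star x * x) (fun _ _ => mul_mem (star_mem hx) hx)
      ⟨Matrix.of fun _ _ => x, by ext i j; simp [Matrix.mul_apply]⟩
    have h2 := HsPos.of_matPos this
    rw [ContinuousLinearMap.nonneg_iff_isPositive, ContinuousLinearMap.isPositive_iff_complex]
    intro v
    have h3 : 0 ≤ inner ℂ v (Φ (star x * x) v) := by simpa [hsForm] using h2 (fun _ => v)
    have h4 : 0 ≤ inner ℂ (Φ (star x * x) v) v := by
      rw [← inner_conj_symm]
      exact star_nonneg_iff.2 h3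
    rw [Complex.le_def] at h4
    refine ⟨?_, h4.1⟩
    apply Complex.ext
    · simp
    · simpa using h4.2)
  refine ⟨C, hC0, fun ν _ M D hM hD hB => ?_⟩
  -- the estimate for compressions
  have key : ∀ e ∈ 𝒞, star e = e → ‖e‖ ≤ 1 → ∀ η ξ : ν → K,
      ‖hsForm ((M.map fun x => e * x * e).map Φ) η ξ‖
        ≤ C * D * ((∑ i, ‖η i‖ ^ 2 + ∑ i, ‖ξ i‖ ^ 2) / 2) := by
    intro e he hse hne η ξ
    let P : Matrix (ν ⊕ ν) (ν ⊕ ν) (K →L[ℂ] K) := Matrix.fromBlocks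
      (Matrix.diagonal fun _ => (D : ℂ) • (e * e)) (M.map fun x => e * x * e)
      (M.map fun x => e * x * e)ᴴ (Matrix.diagonal fun _ => (D : ℂ) • (e * e))
    have hee : (D : ℂ) • (e * e) ∈ 𝒞 := SMulMemClass.smul_mem _ (mul_mem he he)
    have hPmem : ∀ i j, P i j ∈ 𝒞 := by
      have hd : ∀ i j : ν, (Matrix.diagonal fun _ => (D : ℂ) • (e * e)) i j ∈ 𝒞 := by
        intro i j
        by_cases h : i = j
        · subst h; simpa using hee
        · rw [Matrix.diagonal_apply_ne _ h]; exact zero_mem _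
      rintro (i | i) (j | j)
      · exact hd i j
      · exact mul_mem (mul_mem he (hM _ _)) he
      · exact star_mem (mul_mem (mul_mem he (hM _ _)) he)
      · exact hd i j
    have hadj : ∀ u v : K, inner ℂ u (e v) = inner ℂ (e u) v := by
      intro u v
      conv_lhs => rw [← hse, ContinuousLinearMap.star_eq_adjoint,
        ContinuousLinearMap.adjoint_inner_right]
    have hdiag : ∀ u : ν → K, hsForm (Matrix.diagonal fun _ : ν => (D : ℂ) • (e * e)) u u
        = ((D * ∑ i, ‖e (u i)‖ ^ 2 : ℝ) : ℂ) := by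
      intro u
      rw [hsForm_diagonal]
      push_cast
      rw [Finset.mul_sum]
      refine Finset.sum_congr rfl fun i _ => ?_
      change inner ℂ (u i) ((D : ℂ) • e (e (u i))) = _
      rw [inner_smul_right, hadj, inner_self_eq_norm_sq_to_K]
      rfl
    have hPpos : HsPos P := by
      intro ζ
      have hζ : ζ = Sum.elim (ζ ∘ Sum.inl) (ζ ∘ Sum.inr) := (Sum.elim_comp_inl_inr ζ).symm
      rw [hζ]
      generalize ζ ∘ Sum.inl = u
      generalize ζ ∘ Sum.inr = w
      rw [hsForm_fromBlocks, hdiag, hdiag]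
      have h1 : hsForm (M.map fun x => e * x * e) u w
          = hsForm M (fun i => e (u i)) (fun i => e (w i)) := by
        unfold hsForm
        simp [hadj]
      have h2 : hsForm (M.map fun x => e * x * e)ᴴ w u
          = star (hsForm (M.map fun x => e * x * e) u w) := by
        unfold hsForm
        rw [star_sum, Finset.sum_comm]
        refine Finset.sum_congr rfl fun i _ => ?_
        rw [star_sum]
        refine Finset.sum_congr rfl fun j _ => ?_
        rw [Matrix.conjTranspose_apply, ContinuousLinearMap.star_eq_adjoint,
          ContinuousLinearMap.adjoint_inner_right, ← starRingEnd_apply, inner_conj_symm]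
      rw [h2, h1]
      have h3 := hB (fun i => e (u i)) (fun i => e (w i))
      have h4 := Complex.abs_re_le_norm (hsForm M (fun i => e (u i)) (fun i => e (w i)))
      have h5 := (abs_le.1 (h4.trans h3)).1
      rw [Complex.le_def]
      constructor
      · simp only [Complex.add_re, Complex.ofReal_re, Complex.zero_re, Complex.star_def,
          Complex.conj_re]
        linarith
      · simp only [Complex.add_im, Complex.ofReal_im, Complex.zero_im, Complex.star_def,
          Complex.conj_im]
        ring
    have hQ := hs_cp_forms (𝒞 : Set (K →L[ℂ] K)) Φ hΦ P hPmem hPpos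
    have hPmap : P.map Φ = Matrix.fromBlocks
        (Matrix.diagonal fun _ => (D : ℂ) • Φ (e * e)) ((M.map fun x => e * x * e).map Φ)
        ((M.map fun x => e * x * e)ᴴ.map Φ) (Matrix.diagonal fun _ => (D : ℂ) • Φ (e * e)) := by
      rw [Matrix.fromBlocks_map, Matrix.diagonal_map (map_zero Φ)]
      simp
    rw [hPmap] at hQ
    -- scalars
    have hd2 : ∀ u : ν → K, ∃ r : ℝ,
        hsForm (Matrix.diagonal fun _ : ν => (D : ℂ) • Φ (e * e)) u u = (r : ℂ) ∧
        r ≤ C * D * ∑ i, ‖u i‖ ^ 2 := by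
      intro u
      set q := hsForm (Matrix.diagonal fun _ : ν => (D : ℂ) • Φ (e * e)) u u with hq
      have hq0 : 0 ≤ q := by
        have := hQ (Sum.elim u 0)
        rw [hsForm_fromBlocks] at this
        have z1 : ∀ N : Matrix ν ν (K →L[ℂ] K), ∀ v, hsForm N 0 v = 0 := by
          intro N v; simp [hsForm]
        have z2 : ∀ N : Matrix ν ν (K →L[ℂ] K), ∀ v, hsForm N v 0 = 0 := by
          intro N v; simp [hsForm]
        rw [z1, z2, z1] at this
        simpa only [add_zero] using this
      refine ⟨q.re, ?_, ?_⟩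
      · apply Complex.ext
        · simp
        · simpa using (Complex.le_def.1 hq0).2.symm
      · refine (Complex.re_le_norm q).trans ?_
        rw [hq, hsForm_diagonal, Finset.mul_sum]
        refine (norm_sum_le _ _).trans (Finset.sum_le_sum fun i _ => ?_)
        rw [_root_.smul_apply, inner_smul_right, norm_mul, Complex.norm_real,
          Real.norm_of_nonneg hD]
        have h1 : ‖Φ (e * e)‖ ≤ C := by
          refine (hC _ (mul_mem he he)).trans ?_
          have : ‖e * e‖ ≤ 1 := (norm_mul_le _ _).trans (by nlinarith [norm_nonneg e])
          nlinarith
        calc D * ‖inner ℂ (u i) (Φ (e * e) (u i))‖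
            ≤ D * (‖u i‖ * (C * ‖u i‖)) := by
              gcongr
              refine (norm_inner_le_norm _ _).trans ?_
              gcongr
              exact (Φ (e * e)).le_of_opNorm_le h1 _
          _ = _ := by ring
    obtain ⟨r1, hr1, hr1'⟩ := hd2 η
    obtain ⟨r2, hr2, hr2'⟩ := hd2 ξ
    refine (hs_scalar r1 r2 _ (hsForm ((M.map fun x => e * x * e)ᴴ.map Φ) ξ η) ?_).trans ?_
    · intro z hz
      have := hQ (Sum.elim (z • η) ((1 : ℂ) • ξ))
      rw [hsForm_fromBlocks, hsForm_smul_smul, hsForm_smul_smul, hsForm_smul_smul,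
        hsForm_smul_smul, hr1, hr2] at this
      have hzz : star z * z = 1 := by
        rw [Complex.star_def, Complex.conj_mul', hz]; simp
      rw [hzz] at this
      simpa using this
    · linarith
  obtain ⟨l, hne, hl1, hl2, hl3, hl4⟩ := hs_approx_unit 𝒞
  intro η ξ
  have hlim : Filter.Tendsto (fun e : 𝒞 =>
      ‖hsForm ((M.map fun x => (e : K →L[ℂ] K) * x * e).map Φ) η ξ‖) l
      (nhds ‖hsForm (M.map Φ) η ξ‖) := by
    refine Filter.Tendsto.norm ?_
    unfold hsForm
    refine tendsto_finsetSum _ fun i _ => tendsto_finsetSum _ fun j _ => ?_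
    have h1 : Filter.Tendsto (fun e : 𝒞 => Φ ((e : K →L[ℂ] K) * M i j * e)) l
        (nhds (Φ (M i j))) := by
      have h2 : Filter.Tendsto (fun e : 𝒞 => e * (⟨M i j, hM i j⟩ : 𝒞) * e - ⟨M i j, hM i j⟩) l
          (nhds 0) := by
        set m : 𝒞 := ⟨M i j, hM i j⟩
        have h3 : Filter.Tendsto (fun e : 𝒞 => ‖e * m - m‖ + ‖m * e - m‖) l (nhds 0) := by
          have a1 := (tendsto_iff_norm_sub_tendsto_zero.1 (hl2 m))
          have a2 := (tendsto_iff_norm_sub_tendsto_zero.1 (hl1 m))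
          simpa using a1.add a2
        refine squeeze_zero_norm' ?_ h3
        filter_upwards [hl3] with e he
        have : e * m * e - m = (e * m - m) * e + (m * e - m) := by
          rw [sub_mul]; abel
        rw [this]
        refine (norm_add_le _ _).trans ?_
        gcongr
        refine (norm_mul_le _ _).trans ?_
        exact mul_le_of_le_one_right (norm_nonneg _) he
      rw [tendsto_iff_norm_sub_tendsto_zero]
      have h4 : Filter.Tendsto (fun e : 𝒞 => C * ‖e * (⟨M i j, hM i j⟩ : 𝒞) * e - ⟨M i j, hM i j⟩‖)
          l (nhds 0) := by simpa using h2.norm.const_mul C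
      refine squeeze_zero (fun _ => norm_nonneg _) (fun e => ?_) h4
      rw [← map_sub]
      exact hC _ (sub_mem (mul_mem (mul_mem e.2 (hM i j)) e.2) (hM i j))
    have h5 : Continuous fun T : K →L[ℂ] K => inner ℂ (η i) (T (ξ j)) := by fun_prop
    exact (h5.tendsto _).comp h1
  refine le_of_tendsto hlim ?_
  filter_upwards [hl3, hl4] with e he hse
  exact key e e.2 (congrArg Subtype.val hse) he η ξ

end HSCB
end
noncomputable section
open scoped ComplexOrder ENNReal
open Matrix
set_option linter.unusedSectionVars false

section HSCross

variable {H : Type*} [NormedAddCommGroup H] [InnerProductSpace ℂ H] [CompleteSpace H]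
variable {A : Type*} [NonUnitalCStarAlgebra A] {G : Type*} [Group G]
variable (ι : A →⋆ₙₐ[ℂ] (H →L[ℂ] H)) (α : G → A ≃⋆ₐ[ℂ] A)

theorem hs_lam_apply (t : G) (f : lp (fun _ : G => H) 2) (s : G) :
    lam t f s = f (t⁻¹ * s) := rfl

theorem hs_pi_apply (a : A) (f : lp (fun _ : G => H) 2) (s : G) :
    piRep ι α a f s = ι (α s⁻¹ a) (f s) := rfl

theorem hs_eval_apply (s : G) (f : lp (fun _ : G => H) 2) : lpEval s f = f s := rfl

theorem hs_single_same (s : G) (v : H) : lpSingle s v s = v := by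
  classical
  unfold lpSingle
  exact lp.single_apply_self (E := fun _ : G => H) 2 s v

theorem hs_single_ne {s t : G} (h : t ≠ s) (v : H) : lpSingle s v t = 0 := by
  classical
  unfold lpSingle
  exact lp.single_apply_ne (E := fun _ : G => H) 2 s v h

theorem hs_inner_single_left (s : G) (v : H) (f : lp (fun _ : G => H) 2) :
    inner ℂ (lpSingle s v) f = inner ℂ v (f s) := by
  classical
  unfold lpSingle
  exact lp.inner_single_left (𝕜 := ℂ) s v f

theorem hs_norm_single (s : G) (v : H) : ‖lpSingle s v‖ = ‖v‖ := by
  have h : ‖lpSingle s v‖ ^ 2 = ‖v‖ ^ 2 := by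
    have := hs_inner_single_left s v (lpSingle s v)
    rw [hs_single_same, inner_self_eq_norm_sq_to_K, inner_self_eq_norm_sq_to_K] at this
    exact_mod_cast this
  exact (sq_eq_sq₀ (norm_nonneg _) (norm_nonneg _)).1 h

theorem hs_norm_eval_le (s : G) (f : lp (fun _ : G => H) 2) : ‖f s‖ ≤ ‖f‖ :=
  lp.norm_apply_le_norm (by norm_num) f s

/-- entries -/
def hsEnt (x : lp (fun _ : G => H) 2 →L[ℂ] lp (fun _ : G => H) 2) (p q : G) : H →L[ℂ] H :=
  (lpEval p) ∘L x ∘L (lpSingle q)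

theorem hsEnt_apply (x : lp (fun _ : G => H) 2 →L[ℂ] lp (fun _ : G => H) 2) (p q : G) (v : H) :
    hsEnt x p q v = x (lpSingle q v) p := rfl

theorem hsEnt_norm_le (x : lp (fun _ : G => H) 2 →L[ℂ] lp (fun _ : G => H) 2) (p q : G) :
    ‖hsEnt x p q‖ ≤ ‖x‖ := by
  refine ContinuousLinearMap.opNorm_le_bound _ (norm_nonneg _) fun v => ?_
  rw [hsEnt_apply]
  refine (hs_norm_eval_le _ _).trans ((x.le_opNorm _).trans ?_)
  rw [hs_norm_single]

/-- entry, as linear map -/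
def hsEntLin (p q : G) : (lp (fun _ : G => H) 2 →L[ℂ] lp (fun _ : G => H) 2) →ₗ[ℂ] (H →L[ℂ] H) :=
  { toFun := fun x => hsEnt x p q
    map_add' := fun x y => by ext v; rfl
    map_smul' := fun c x => by ext v; rfl }

theorem hs_lam_mul (s t : G) : (lam s * lam t : lp (fun _ : G => H) 2 →L[ℂ] _) = lam (s * t) := by
  apply ContinuousLinearMap.ext; intro f
  apply lp.ext; funext r
  change f (t⁻¹ * (s⁻¹ * r)) = f ((s * t)⁻¹ * r)
  rw [_root_.mul_inv_rev, mul_assoc]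

theorem hs_lam_one : (lam (1 : G) : lp (fun _ : G => H) 2 →L[ℂ] _) = 1 := by
  apply ContinuousLinearMap.ext; intro f
  apply lp.ext; funext r
  change f (1⁻¹ * r) = f r
  simp

theorem hs_lam_star (t : G) : star (lam t : lp (fun _ : G => H) 2 →L[ℂ] _) = lam t⁻¹ := by
  rw [ContinuousLinearMap.star_eq_adjoint]
  symm
  rw [ContinuousLinearMap.eq_adjoint_iff]
  intro f g
  have h1 := lp.hasSum_inner (𝕜 := ℂ) (lam t⁻¹ f) g
  have h2 := lp.hasSum_inner (𝕜 := ℂ) f (lam t g)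
  rw [← (Equiv.mulLeft t).hasSum_iff] at h2
  refine h1.unique ?_
  convert h2 using 2 with s
  simp [hs_lam_apply]

theorem hs_pi_mul (a b : A) : piRep ι α a * piRep ι α b = piRep ι α (a * b) := by
  apply ContinuousLinearMap.ext; intro f
  apply lp.ext; funext r
  change ι (α r⁻¹ a) (ι (α r⁻¹ b) (f r)) = ι (α r⁻¹ (a * b)) (f r)
  rw [map_mul, map_mul]; rfl

theorem hs_pi_star (a : A) : star (piRep ι α a) = piRep ι α (star a) := by
  rw [ContinuousLinearMap.star_eq_adjoint]
  symm
  rw [ContinuousLinearMap.eq_adjoint_iff]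
  intro f g
  have h1 := lp.hasSum_inner (𝕜 := ℂ) (piRep ι α (star a) f) g
  have h2 := lp.hasSum_inner (𝕜 := ℂ) f (piRep ι α a g)
  refine h1.unique ?_
  convert h2 using 2 with s
  rw [hs_pi_apply, hs_pi_apply, map_star, map_star, ContinuousLinearMap.star_eq_adjoint,
    ContinuousLinearMap.adjoint_inner_left]

theorem hs_lam_pi (hα : IsAction α) (t : G) (a : A) :
    lam t * piRep ι α a = piRep ι α (α t a) * lam t := by
  apply ContinuousLinearMap.ext; intro f
  apply lp.ext; funext r
  change ι (α (t⁻¹ * r)⁻¹ a) (f (t⁻¹ * r)) = ι (α r⁻¹ (α t a)) (f (t⁻¹ * r))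
  rw [← hα.2]
  simp

theorem hs_pi_norm (a : A) : ‖piRep ι α a‖ ≤ ‖a‖ := by
  unfold piRep diagOp
  refine (LinearMap.mkContinuous_norm_le _ (le_max_right _ _) _).trans ?_
  simp

theorem hs_lam_norm (t : G) : ‖(lam t : lp (fun _ : G => H) 2 →L[ℂ] _)‖ ≤ 1 := by
  unfold lam
  exact LinearMap.mkContinuous_norm_le _ zero_le_one _

/-- span of generators -/
def hsV : Submodule ℂ (lp (fun _ : G => H) 2 →L[ℂ] lp (fun _ : G => H) 2) :=
  Submodule.span ℂ {x | ∃ (a : A) (t : G), x = piRep ι α a * lam t}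

theorem hs_gen_mem (a : A) (t : G) : piRep ι α a * lam t ∈ hsV ι α :=
  Submodule.subset_span ⟨a, t, rfl⟩

theorem hs_gen_mul (hα : IsAction α) (a b : A) (s t : G) :
    (piRep ι α a * lam s) * (piRep ι α b * lam t) = piRep ι α (a * α s b) * lam (s * t) := by
  rw [← hs_pi_mul, ← hs_lam_mul, mul_assoc, ← mul_assoc (lam s), hs_lam_pi ι α hα]
  simp only [mul_assoc]

theorem hs_gen_star (hα : IsAction α) (a : A) (s : G) :
    star (piRep ι α a * lam s) = piRep ι α (α s⁻¹ (star a)) * lam s⁻¹ := by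
  rw [star_mul, hs_pi_star, hs_lam_star, hs_lam_pi ι α hα]

/-- the crossed product as a closed subalgebra -/
def hsAlg0 (hα : IsAction α) :
    NonUnitalStarSubalgebra ℂ (lp (fun _ : G => H) 2 →L[ℂ] lp (fun _ : G => H) 2) :=
  { hsV ι α with
    mul_mem' := by
      intro x y hx hy
      change x * y ∈ hsV ι α
      change x ∈ hsV ι α at hx
      change y ∈ hsV ι α at hy
      unfold hsV at hx
      induction hx using Submodule.span_induction with
      | zero => rw [zero_mul]; exact zero_mem _
      | add u v _ _ hu hv => rw [add_mul]; exact add_mem hu hv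
      | smul c u _ hu => rw [smul_mul_assoc]; exact Submodule.smul_mem _ _ hu
      | mem u hu =>
        obtain ⟨a, s, rfl⟩ := hu
        unfold hsV at hy
        induction hy using Submodule.span_induction with
        | zero => rw [mul_zero]; exact zero_mem _
        | add u v _ _ hu hv => rw [mul_add]; exact add_mem hu hv
        | smul c u _ hu => rw [mul_smul_comm]; exact Submodule.smul_mem _ _ hu
        | mem v hv =>
          obtain ⟨b, t, rfl⟩ := hv
          rw [hs_gen_mul ι α hα]
          exact hs_gen_mem ι α _ _
    star_mem' := by
      intro x hx
      change star x ∈ hsV ι α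
      change x ∈ hsV ι α at hx
      unfold hsV at hx
      induction hx using Submodule.span_induction with
      | zero => rw [star_zero]; exact zero_mem _
      | add u v _ _ hu hv => rw [star_add]; exact add_mem hu hv
      | smul c u _ hu => rw [star_smul]; exact Submodule.smul_mem _ _ hu
      | mem u hu =>
        obtain ⟨a, s, rfl⟩ := hu
        rw [hs_gen_star ι α hα]
        exact hs_gen_mem ι α _ _ }

/-- the crossed product as a closed subalgebra -/
def hsAlg (hα : IsAction α) :
    NonUnitalStarSubalgebra ℂ (lp (fun _ : G => H) 2 →L[ℂ] lp (fun _ : G => H) 2) :=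
  (hsAlg0 ι α hα).topologicalClosure

theorem hsAlg_coe (hα : IsAction α) :
    (hsAlg ι α hα : Set (lp (fun _ : G => H) 2 →L[ℂ] lp (fun _ : G => H) 2)) = CrossedSet ι α := rfl

theorem hs_mem_iff (x : lp (fun _ : G => H) 2 →L[ℂ] lp (fun _ : G => H) 2) :
    x ∈ CrossedSet ι α ↔ x ∈ (hsV ι α).topologicalClosure := Iff.rfl

theorem hs_gen_mem' (a : A) (t : G) : piRep ι α a * lam t ∈ CrossedSet ι α :=
  subset_closure (hs_gen_mem ι α a t)

theorem hs_mul_lam_mem {x : lp (fun _ : G => H) 2 →L[ℂ] lp (fun _ : G => H) 2}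
    (hx : x ∈ CrossedSet ι α) (t : G) : x * lam t ∈ CrossedSet ι α := by
  refine map_mem_closure (f := fun x => x * lam t) (by fun_prop) hx ?_
  intro y hy
  change y ∈ hsV ι α at hy
  change y * lam t ∈ hsV ι α
  unfold hsV at hy
  induction hy using Submodule.span_induction with
  | zero => rw [zero_mul]; exact zero_mem _
  | add u v _ _ hu hv => rw [add_mul]; exact add_mem hu hv
  | smul c u _ hu => rw [smul_mul_assoc]; exact Submodule.smul_mem _ _ hu
  | mem u hu =>
    obtain ⟨a, s, rfl⟩ := hu
    rw [mul_assoc, hs_lam_mul]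
    exact hs_gen_mem ι α _ _

theorem hs_zero_closure {Z : Type*} [NormedAddCommGroup Z] [NormedSpace ℂ Z]
    (h : (lp (fun _ : G => H) 2 →L[ℂ] lp (fun _ : G => H) 2) →ₗ[ℂ] Z) (C : ℝ)
    (hb : ∀ x ∈ CrossedSet ι α, ‖h x‖ ≤ C * ‖x‖)
    (h0 : ∀ a t, h (piRep ι α a * lam t) = 0) : ∀ x ∈ CrossedSet ι α, h x = 0 := by
  have h1 : ∀ x ∈ hsV ι α, h x = 0 := by
    intro x hx
    unfold hsV at hx
    induction hx using Submodule.span_induction with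
    | zero => simp
    | add u v _ _ hu hv => rw [map_add, hu, hv, add_zero]
    | smul c u _ hu => rw [map_smul, hu, smul_zero]
    | mem u hu => obtain ⟨a, t, rfl⟩ := hu; exact h0 a t
  intro x hx
  obtain ⟨y, hy, hlim⟩ := mem_closure_iff_seq_limit.1 hx
  have h2 : Filter.Tendsto (fun n => C * ‖x - y n‖) Filter.atTop (nhds 0) := by
    have : Filter.Tendsto (fun n => x - y n) Filter.atTop (nhds (x - x)) := hlim.const_sub x
    simpa using this.norm.const_mul C
  have h3 : ‖h x‖ ≤ 0 := by
    refine ge_of_tendsto' h2 fun n => ?_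
    have : h x = h (x - y n) := by rw [map_sub, h1 _ (hy n), sub_zero]
    rw [this]
    refine hb _ ?_
    rw [hs_mem_iff]
    exact sub_mem hx (Submodule.le_topologicalClosure _ (hy n))
  exact norm_le_zero_iff.1 h3

theorem hsEnt_gen_same (a : A) (t p q : G) (h : p = t * q) :
    hsEnt (piRep ι α a * lam t) p q = ι (α p⁻¹ a) := by
  ext v
  change ι (α p⁻¹ a) (lpSingle q v (t⁻¹ * p)) = _
  have : t⁻¹ * p = q := by rw [h]; simp
  rw [this, hs_single_same]

theorem hsEnt_gen_ne (a : A) (t p q : G) (h : p ≠ t * q) :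
    hsEnt (piRep ι α a * lam t) p q = 0 := by
  ext v
  change ι (α p⁻¹ a) (lpSingle q v (t⁻¹ * p)) = _
  have : t⁻¹ * p ≠ q := by rintro rfl; simp at h
  rw [hs_single_ne this, map_zero]; rfl

variable (E : (lp (fun _ : G => H) 2 →L[ℂ] lp (fun _ : G => H) 2) →ₗ[ℂ] A)

theorem hs_E_norm (hisom : ∀ a : A, ‖ι a‖ = ‖a‖) (hE : IsCondExp ι α E)
    {x : lp (fun _ : G => H) 2 →L[ℂ] lp (fun _ : G => H) 2}
    (hx : x ∈ CrossedSet ι α) : ‖E x‖ ≤ ‖x‖ := by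
  rw [← hisom, hE x hx]
  exact hsEnt_norm_le x 1 1

theorem hs_El_norm (hisom : ∀ a : A, ‖ι a‖ = ‖a‖) (hE : IsCondExp ι α E)
    {x : lp (fun _ : G => H) 2 →L[ℂ] lp (fun _ : G => H) 2}
    (hx : x ∈ CrossedSet ι α) (t : G) : ‖E (x * lam t)‖ ≤ ‖x‖ := by
  refine (hs_E_norm ι α E hisom hE (hs_mul_lam_mem ι α hx t)).trans ?_
  refine (norm_mul_le _ _).trans ?_
  exact mul_le_of_le_one_right (norm_nonneg _) (hs_lam_norm t)

theorem hs_E_gen (hisom : ∀ a : A, ‖ι a‖ = ‖a‖) (hα : IsAction α) (hE : IsCondExp ι α E)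
    (a : A) : E (piRep ι α a * lam 1) = a := by
  have h1 := hE _ (hs_gen_mem' ι α a 1)
  have h2 := hsEnt_gen_same ι α a 1 1 1 (by simp)
  have h3 : ι (E (piRep ι α a * lam 1) - a) = 0 := by
    rw [map_sub, sub_eq_zero, h1]
    refine h2.trans ?_
    rw [inv_one, hα.1]
  rw [← sub_eq_zero, ← norm_eq_zero, ← hisom, h3, norm_zero]

theorem hs_E_gen_ne (hisom : ∀ a : A, ‖ι a‖ = ‖a‖) (hE : IsCondExp ι α E)
    (a : A) (t : G) (ht : t ≠ 1) : E (piRep ι α a * lam t) = 0 := by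
  have h1 := hE _ (hs_gen_mem' ι α a t)
  have h2 := hsEnt_gen_ne ι α a t 1 1 (by simpa using ht.symm)
  rw [← norm_eq_zero, ← hisom, h1]
  exact norm_eq_zero.2 h2

theorem hs_entry (hisom : ∀ a : A, ‖ι a‖ = ‖a‖) (hα : IsAction α) (hE : IsCondExp ι α E)
    {x : lp (fun _ : G => H) 2 →L[ℂ] lp (fun _ : G => H) 2}
    (hx : x ∈ CrossedSet ι α) (p q : G) :
    hsEnt x p q = ι (α p⁻¹ (E (x * lam (p * q⁻¹)⁻¹))) := by
  let h : (lp (fun _ : G => H) 2 →L[ℂ] lp (fun _ : G => H) 2) →ₗ[ℂ] (H →L[ℂ] H) :=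
    hsEntLin p q - iotaLin ι ∘ₗ autLin (α p⁻¹) ∘ₗ E ∘ₗ LinearMap.mulRight ℂ (lam (p * q⁻¹)⁻¹)
  have hh : ∀ x, h x = hsEnt x p q - ι (α p⁻¹ (E (x * lam (p * q⁻¹)⁻¹))) := fun x => rfl
  have := hs_zero_closure ι α h 2 ?_ ?_ x hx
  · rw [hh, sub_eq_zero] at this
    exact this
  · intro x hx
    rw [hh]
    refine (norm_sub_le _ _).trans ?_
    rw [hisom, StarAlgEquiv.norm_map]
    have h1 := hs_El_norm ι α E hisom hE hx (p * q⁻¹)⁻¹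
    have h2 := hsEnt_norm_le x p q
    linarith
  · intro a t
    rw [hh, mul_assoc, hs_lam_mul]
    by_cases ht : p = t * q
    · rw [hsEnt_gen_same ι α a t p q ht]
      have : t * (p * q⁻¹)⁻¹ = 1 := by rw [ht]; simp
      rw [this, hs_E_gen ι α E hisom hα hE, sub_self]
    · rw [hsEnt_gen_ne ι α a t p q ht]
      have : t * (p * q⁻¹)⁻¹ ≠ 1 := by
        intro h; apply ht
        rw [mul_inv_eq_one] at h; rw [h]; simp
      rw [hs_E_gen_ne ι α E hisom hE _ _ this]
      simp

end HSCross
end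
noncomputable section
open scoped ComplexOrder ENNReal
open Matrix
set_option linter.unusedSectionVars false

section HSBand

variable {H : Type*} [NormedAddCommGroup H] [InnerProductSpace ℂ H] [CompleteSpace H]
variable {A : Type*} [NonUnitalCStarAlgebra A] {G : Type*} [Group G]

/-- finite combination -/
def hsComb (F : Finset G) (u : G) (a : F → H) : lp (fun _ : G => H) 2 :=
  ∑ p : F, lpSingle ((p : G) * u) (a p)

theorem hs_inner_comb (F : Finset G) (u : G) (a : F → H) (f : lp (fun _ : G => H) 2) :
    inner ℂ (hsComb F u a) f = ∑ p : F, inner ℂ (a p) (f ((p : G) * u)) := by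
  unfold hsComb
  rw [sum_inner]
  exact Finset.sum_congr rfl fun p _ => hs_inner_single_left _ _ _

theorem hs_comb_apply (F : Finset G) (u : G) (a : F → H) (p : F) :
    hsComb F u a ((p : G) * u) = a p := by
  have h : hsComb F u a ((p : G) * u) = ∑ q : F, lpSingle ((q : G) * u) (a q) ((p : G) * u) := by
    change lpEval ((p : G) * u) (hsComb F u a) = _
    unfold hsComb
    rw [map_sum]; rfl
  rw [h, Finset.sum_eq_single p]
  · exact hs_single_same _ _
  · intro q _ hq
    apply hs_single_ne
    intro h; apply hq
    exact (Subtype.ext (mul_right_cancel h)).symm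
  · simp

theorem hs_comb_norm (F : Finset G) (u : G) (a : F → H) :
    ‖hsComb F u a‖ ^ 2 = ∑ p : F, ‖a p‖ ^ 2 := by
  have h := hs_inner_comb F u a (hsComb F u a)
  simp only [hs_comb_apply, inner_self_eq_norm_sq_to_K] at h
  exact_mod_cast h

theorem hs_form_comb {ν : Type*} [Fintype ν]
    (M : Matrix ν ν (lp (fun _ : G => H) 2 →L[ℂ] lp (fun _ : G => H) 2))
    (F : Finset G) (u : G) (a b : ν × F → H) :
    hsForm M (fun i => hsComb F u fun p => a (i, p)) (fun i => hsComb F u fun p => b (i, p))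
      = ∑ k : ν × F, ∑ l : ν × F, inner ℂ (a k)
        (hsEnt (M k.1 l.1) ((k.2 : G) * u) ((l.2 : G) * u) (b l)) := by
  unfold hsForm
  simp only [hs_inner_comb, Fintype.sum_prod_type]
  refine Finset.sum_congr rfl fun i _ => ?_
  rw [Finset.sum_comm]
  refine Finset.sum_congr rfl fun p _ => Finset.sum_congr rfl fun j _ => ?_
  rw [← inner_sum]
  congr 1
  unfold hsComb
  change lpEval _ (M i j _) = _
  rw [map_sum, map_sum]
  rfl

theorem hs_hasSum_norm (f : lp (fun _ : G => H) 2) (p : G) :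
    HasSum (fun u => ‖f (p * u)‖ ^ 2) (‖f‖ ^ 2) := by
  have h := lp.hasSum_norm (p := 2) (by norm_num) f
  rw [← (Equiv.mulLeft p).hasSum_iff] at h
  simpa [Function.comp_def] using h

variable (ι : A →⋆ₙₐ[ℂ] (H →L[ℂ] H)) (α : G → A ≃⋆ₐ[ℂ] A)
variable (E : (lp (fun _ : G => H) 2 →L[ℂ] lp (fun _ : G => H) 2) →ₗ[ℂ] A)

/-- the s-th band -/
def hsBand (x : lp (fun _ : G => H) 2 →L[ℂ] lp (fun _ : G => H) 2) (s : G) :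
    lp (fun _ : G => H) 2 →L[ℂ] lp (fun _ : G => H) 2 :=
  piRep ι α (E (x * lam s⁻¹)) * lam s

theorem hsBand_mem (x : lp (fun _ : G => H) 2 →L[ℂ] lp (fun _ : G => H) 2) (s : G) :
    hsBand ι α E x s ∈ CrossedSet ι α := hs_gen_mem' ι α _ _

theorem hsBand_apply (hisom : ∀ a : A, ‖ι a‖ = ‖a‖) (hα : IsAction α) (hE : IsCondExp ι α E)
    {x : lp (fun _ : G => H) 2 →L[ℂ] lp (fun _ : G => H) 2}
    (hx : x ∈ CrossedSet ι α) (p q u : G) (f : lp (fun _ : G => H) 2) :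
    hsBand ι α E x (p * q⁻¹) f (p * u) = hsEnt x (p * u) (q * u) (f (q * u)) := by
  rw [hs_entry ι α E hisom hα hE hx]
  have h1 : p * u * (q * u)⁻¹ = p * q⁻¹ := by group
  have h2 : (p * q⁻¹)⁻¹ * (p * u) = q * u := by group
  rw [h1]
  change ι (α (p * u)⁻¹ (E (x * lam (p * q⁻¹)⁻¹))) (f ((p * q⁻¹)⁻¹ * (p * u))) = _
  rw [h2]

/-- the band matrix -/
def hsBandMat {ν : Type*} (M : Matrix ν ν (lp (fun _ : G => H) 2 →L[ℂ] lp (fun _ : G => H) 2))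
    (F : Finset G) :
    Matrix (ν × F) (ν × F) (lp (fun _ : G => H) 2 →L[ℂ] lp (fun _ : G => H) 2) :=
  fun k l => hsBand ι α E (M k.1 l.1) ((k.2 : G) * (l.2 : G)⁻¹)

theorem hs_band_hasSum (hisom : ∀ a : A, ‖ι a‖ = ‖a‖) (hα : IsAction α) (hE : IsCondExp ι α E)
    {ν : Type*} [Fintype ν]
    (M : Matrix ν ν (lp (fun _ : G => H) 2 →L[ℂ] lp (fun _ : G => H) 2))
    (hM : ∀ i j, M i j ∈ CrossedSet ι α) (F : Finset G)
    (a b : ν × F → lp (fun _ : G => H) 2) :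
    HasSum (fun u : G => hsForm M (fun i => hsComb F u fun p => a (i, p) ((p : G) * u))
        (fun i => hsComb F u fun p => b (i, p) ((p : G) * u)))
      (hsForm (hsBandMat ι α E M F) a b) := by
  have h1 : ∀ u : G, hsForm M (fun i => hsComb F u fun p => a (i, p) ((p : G) * u))
        (fun i => hsComb F u fun p => b (i, p) ((p : G) * u)) =
        ∑ k : ν × F, ∑ l : ν × F, inner ℂ (a k ((k.2 : G) * u))
          (hsBandMat ι α E M F k l (b l) ((k.2 : G) * u)) := by
    intro u
    rw [hs_form_comb M F u (fun k => a k ((k.2 : G) * u)) (fun k => b k ((k.2 : G) * u))]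
    refine Finset.sum_congr rfl fun k _ => Finset.sum_congr rfl fun l _ => ?_
    unfold hsBandMat
    rw [hsBand_apply ι α E hisom hα hE (hM _ _)]
  simp only [h1]
  unfold hsForm
  refine hasSum_sum fun k _ => hasSum_sum fun l _ => ?_
  have h := lp.hasSum_inner (𝕜 := ℂ) (a k) (hsBandMat ι α E M F k l (b l))
  rw [← (Equiv.mulLeft (k.2 : G)).hasSum_iff] at h
  exact h

theorem hs_band_pos (hisom : ∀ a : A, ‖ι a‖ = ‖a‖) (hα : IsAction α) (hE : IsCondExp ι α E)
    {ν : Type*} [Fintype ν]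
    (M : Matrix ν ν (lp (fun _ : G => H) 2 →L[ℂ] lp (fun _ : G => H) 2))
    (hM : ∀ i j, M i j ∈ CrossedSet ι α) (F : Finset G) (hp : HsPos M) :
    HsPos (hsBandMat ι α E M F) := by
  intro ξ
  exact (hs_band_hasSum ι α E hisom hα hE M hM F ξ ξ).nonneg fun u => hp _

theorem hs_band_bd (hisom : ∀ a : A, ‖ι a‖ = ‖a‖) (hα : IsAction α) (hE : IsCondExp ι α E)
    {ν : Type*} [Fintype ν]
    (M : Matrix ν ν (lp (fun _ : G => H) 2 →L[ℂ] lp (fun _ : G => H) 2))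
    (hM : ∀ i j, M i j ∈ CrossedSet ι α) (F : Finset G) (D : ℝ) (hp : HsBd M D) :
    HsBd (hsBandMat ι α E M F) D := by
  intro η ξ
  have h1 := hs_band_hasSum ι α E hisom hα hE M hM F η ξ
  have hs : ∀ η : ν × F → lp (fun _ : G => H) 2,
      HasSum (fun u : G => ∑ i, ‖hsComb F u fun p => η (i, p) ((p : G) * u)‖ ^ 2)
        (∑ k, ‖η k‖ ^ 2) := by
    intro η
    simp only [hs_comb_norm]
    rw [Fintype.sum_prod_type]
    refine hasSum_sum fun i _ => hasSum_sum fun p _ => hs_hasSum_norm _ _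
  have h2 := (((hs η).add (hs ξ)).div_const 2).mul_left D
  rw [← h1.tsum_eq]
  exact tsum_of_norm_bounded h2 fun u => hp _ _

end HSBand
end
noncomputable section
open scoped ComplexOrder ENNReal
open Matrix
set_option linter.unusedSectionVars false

section HSRel

variable {H : Type*} [NormedAddCommGroup H] [InnerProductSpace ℂ H] [CompleteSpace H]
variable {A : Type*} [NonUnitalCStarAlgebra A] {G : Type*} [Group G]
variable (ι : A →⋆ₙₐ[ℂ] (H →L[ℂ] H)) (α : G → A ≃⋆ₐ[ℂ] A)
variable (E : (lp (fun _ : G => H) 2 →L[ℂ] lp (fun _ : G => H) 2) →ₗ[ℂ] A)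
variable (Φ : (lp (fun _ : G => H) 2 →L[ℂ] lp (fun _ : G => H) 2) →ₗ[ℂ]
         (lp (fun _ : G => H) 2 →L[ℂ] lp (fun _ : G => H) 2))

/-- y is the Schur image of x -/
def HsRel (x y : lp (fun _ : G => H) 2 →L[ℂ] lp (fun _ : G => H) 2) : Prop :=
  ∀ p q : G, hsEnt y p q = hsEnt (Φ (hsBand ι α E x (p * q⁻¹))) p q

/-- truncation -/
def hsTrunc (F : Finset G) (f : lp (fun _ : G => H) 2) : lp (fun _ : G => H) 2 :=
  hsComb F 1 fun p => f p

theorem hs_trunc_tendsto (f : lp (fun _ : G => H) 2) :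
    Filter.Tendsto (fun F => hsTrunc F f) Filter.atTop (nhds f) := by
  classical
  have h := lp.hasSum_single (E := fun _ : G => H) (p := 2) (by norm_num) f
  refine Filter.Tendsto.congr (fun F => ?_) h
  unfold hsTrunc hsComb
  rw [← Finset.sum_coe_sort F]
  refine Finset.sum_congr rfl fun p _ => ?_
  rw [mul_one]
  unfold lpSingle
  simp only [LinearMap.mkContinuous_apply]
  rfl

theorem hs_trunc_norm (F : Finset G) (f : lp (fun _ : G => H) 2) :
    ∑ p : F, ‖f p‖ ^ 2 ≤ ‖f‖ ^ 2 := by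
  have h := hs_hasSum_norm f 1
  simp only [one_mul] at h
  rw [Finset.sum_coe_sort F fun p => ‖f p‖ ^ 2]
  exact sum_le_hasSum F (fun _ _ => by positivity) h

theorem hs_rel_form {ν : Type*} [Fintype ν]
    (M M' : Matrix ν ν (lp (fun _ : G => H) 2 →L[ℂ] lp (fun _ : G => H) 2))
    (hR : ∀ i j, HsRel ι α E Φ (M i j) (M' i j)) (F : Finset G)
    (η ξ : ν → lp (fun _ : G => H) 2) :
    hsForm M' (fun i => hsTrunc F (η i)) (fun i => hsTrunc F (ξ i)) =
      hsForm ((hsBandMat ι α E M F).map Φ) (fun k => lpSingle (k.2 : G) (η k.1 k.2))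
        (fun k => lpSingle (k.2 : G) (ξ k.1 k.2)) := by
  unfold hsTrunc
  rw [hs_form_comb M' F 1 (fun k => η k.1 k.2) (fun k => ξ k.1 k.2)]
  unfold hsForm
  refine Finset.sum_congr rfl fun k _ => Finset.sum_congr rfl fun l _ => ?_
  rw [hs_inner_single_left, mul_one, mul_one, hR]
  rfl

theorem hs_form_tendsto {ν : Type*} [Fintype ν]
    (M : Matrix ν ν (lp (fun _ : G => H) 2 →L[ℂ] lp (fun _ : G => H) 2))
    (η ξ : ν → lp (fun _ : G => H) 2) :
    Filter.Tendsto (fun F => hsForm M (fun i => hsTrunc F (η i)) (fun i => hsTrunc F (ξ i)))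
      Filter.atTop (nhds (hsForm M η ξ)) := by
  unfold hsForm
  refine tendsto_finsetSum _ fun i _ => tendsto_finsetSum _ fun j _ => ?_
  exact (hs_trunc_tendsto _).inner (((M i j).continuous.tendsto _).comp (hs_trunc_tendsto _))

theorem hs_rel_pos (hisom : ∀ a : A, ‖ι a‖ = ‖a‖) (hα : IsAction α) (hE : IsCondExp ι α E)
    (hΦ : CPOnCrossed ι α Φ) {ν : Type*} [Fintype ν]
    (M M' : Matrix ν ν (lp (fun _ : G => H) 2 →L[ℂ] lp (fun _ : G => H) 2))
    (hM : ∀ i j, M i j ∈ CrossedSet ι α)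
    (hR : ∀ i j, HsRel ι α E Φ (M i j) (M' i j)) (hp : HsPos M) : HsPos M' := by
  intro ξ
  refine ge_of_tendsto' (hs_form_tendsto M' ξ ξ) fun F => ?_
  rw [hs_rel_form ι α E Φ M M' hR F]
  exact hs_cp_forms (CrossedSet ι α) Φ hΦ.2 _ (fun k l => hsBand_mem ι α E _ _)
    (hs_band_pos ι α E hisom hα hE M hM F hp) _

theorem hs_rel_bd (hisom : ∀ a : A, ‖ι a‖ = ‖a‖) (hα : IsAction α) (hE : IsCondExp ι α E)
    (hΦ : CPOnCrossed ι α Φ) : ∃ C : ℝ, 0 ≤ C ∧ ∀ (n : ℕ)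
    (M M' : Matrix (Fin n) (Fin n) (lp (fun _ : G => H) 2 →L[ℂ] lp (fun _ : G => H) 2)) (D : ℝ),
    (∀ i j, M i j ∈ CrossedSet ι α) → (∀ i j, HsRel ι α E Φ (M i j) (M' i j)) →
    0 ≤ D → HsBd M D → HsBd M' (C * D) := by
  have hcl : IsClosed (hsAlg ι α hα : Set (lp (fun _ : G => H) 2 →L[ℂ] lp (fun _ : G => H) 2)) := by
    rw [hsAlg_coe]; exact isClosed_closure
  obtain ⟨C, hC, h⟩ := hs_cb (hsAlg ι α hα) Φ hΦ.2
  refine ⟨C, hC, fun n M M' D hM hR hD hb η ξ => ?_⟩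
  refine le_of_tendsto' (hs_form_tendsto M' η ξ).norm fun F => ?_
  rw [hs_rel_form ι α E Φ M M' hR F]
  refine (h (Fin n × F) _ D (fun k l => hsBand_mem ι α E _ _) hD
    (hs_band_bd ι α E hisom hα hE M hM F D hb) _ _).trans ?_
  simp only [hs_norm_single, Fintype.sum_prod_type]
  have h1 : ∀ f : Fin n → lp (fun _ : G => H) 2,
      ∑ i, ∑ p : F, ‖f i p‖ ^ 2 ≤ ∑ i, ‖f i‖ ^ 2 := fun f =>
    Finset.sum_le_sum fun i _ => hs_trunc_norm F (f i)
  have := h1 η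
  have := h1 ξ
  gcongr

theorem hs_rel_norm (hisom : ∀ a : A, ‖ι a‖ = ‖a‖) (hα : IsAction α) (hE : IsCondExp ι α E)
    (hΦ : CPOnCrossed ι α Φ) : ∃ C : ℝ, 0 ≤ C ∧
    ∀ x y : (lp (fun _ : G => H) 2 →L[ℂ] lp (fun _ : G => H) 2),
    x ∈ CrossedSet ι α → HsRel ι α E Φ x y → ‖y‖ ≤ C * ‖x‖ := by
  obtain ⟨C, hC, h⟩ := hs_rel_bd ι α E Φ hisom hα hE hΦ
  refine ⟨C, hC, fun x y hx hR => ?_⟩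
  have := h 1 (fun _ _ => x) (fun _ _ => y) ‖x‖ (fun _ _ => hx) (fun _ _ => hR) (norm_nonneg _) ?_
  · refine hs_opNorm_le _ (by positivity) fun η ξ => ?_
    simpa [hsForm] using this (fun _ => η) (fun _ => ξ)
  · intro η ξ
    simp only [hsForm, Finset.univ_unique, Finset.sum_singleton]
    refine (norm_inner_le_norm _ _).trans ?_
    have h1 := x.le_opNorm (ξ default)
    have h2 : ‖η default‖ * ‖x (ξ default)‖ ≤ ‖η default‖ * (‖x‖ * ‖ξ default‖) := by gcongr
    refine h2.trans ?_
    nlinarith [mul_nonneg (norm_nonneg x) (sq_nonneg (‖η default‖ - ‖ξ default‖))]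

theorem hs_hMap_apply (s : G) (a : A) :
    hMap ι α E Φ s a = E (Φ (piRep ι α a * lam s) * lam s⁻¹) := by
  rw [← hs_lam_star]; rfl

/-- pi lambda as linear map -/
def hsGenLin (s : G) : A →ₗ[ℂ] (lp (fun _ : G => H) 2 →L[ℂ] lp (fun _ : G => H) 2) :=
  (LinearMap.mulRight ℂ (lam s)) ∘ₗ piRepLin ι α

theorem hsGenLin_apply (s : G) (a : A) : hsGenLin ι α s a = piRep ι α a * lam s := rfl

/-- band as linear map -/
def hsBandLin (s : G) : (lp (fun _ : G => H) 2 →L[ℂ] lp (fun _ : G => H) 2) →ₗ[ℂ]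
    (lp (fun _ : G => H) 2 →L[ℂ] lp (fun _ : G => H) 2) :=
  hsGenLin ι α s ∘ₗ E ∘ₗ LinearMap.mulRight ℂ (lam s⁻¹)

theorem hsBandLin_apply (s : G) (x : lp (fun _ : G => H) 2 →L[ℂ] lp (fun _ : G => H) 2) :
    hsBandLin ι α E s x = hsBand ι α E x s := rfl

theorem hs_rel_add {x y x' y' : lp (fun _ : G => H) 2 →L[ℂ] lp (fun _ : G => H) 2}
    (h : HsRel ι α E Φ x y) (h' : HsRel ι α E Φ x' y') : HsRel ι α E Φ (x + x') (y + y') := by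
  intro p q
  have e1 : hsEnt (y + y') p q = hsEnt y p q + hsEnt y' p q := (hsEntLin p q).map_add y y'
  rw [e1, h, h', ← hsBandLin_apply, ← hsBandLin_apply, ← hsBandLin_apply, map_add, map_add]
  exact ((hsEntLin p q).map_add _ _).symm

theorem hs_rel_zero : HsRel ι α E Φ 0 0 := by
  intro p q
  rw [← hsBandLin_apply, map_zero, map_zero]

theorem hs_rel_gen (hisom : ∀ a : A, ‖ι a‖ = ‖a‖) (hα : IsAction α) (hE : IsCondExp ι α E)
    (hΦ : CPOnCrossed ι α Φ) (a : A) (s : G) :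
    HsRel ι α E Φ (piRep ι α a * lam s) (piRep ι α (hMap ι α E Φ s a) * lam s) := by
  intro p q
  unfold hsBand
  rw [mul_assoc, hs_lam_mul]
  by_cases h : p = s * q
  · rw [hsEnt_gen_same ι α _ s p q h]
    have h1 : p * q⁻¹ = s := by rw [h]; simp
    have h2 : s * (p * q⁻¹)⁻¹ = 1 := by rw [h1]; simp
    rw [h2, hs_E_gen ι α E hisom hα hE, hs_entry ι α E hisom hα hE (hΦ.1 _ (hs_gen_mem' ι α _ _)),
      h1, hs_hMap_apply]
  · rw [hsEnt_gen_ne ι α _ s p q h]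
    have : s * (p * q⁻¹)⁻¹ ≠ 1 := by
      intro h'; apply h
      rw [mul_inv_eq_one] at h'; rw [h']; simp
    rw [hs_E_gen_ne ι α E hisom hE _ _ this, ← hsGenLin_apply, map_zero, map_zero]
    exact ((hsEntLin p q).map_zero).symm

theorem hs_phi_bdd (hα : IsAction α) (hΦ : CPOnCrossed ι α Φ) :
    ∃ C : ℝ, 0 ≤ C ∧ ∀ x ∈ CrossedSet ι α, ‖Φ x‖ ≤ C * ‖x‖ := by
  have hcl : IsClosed (hsAlg ι α hα : Set (lp (fun _ : G => H) 2 →L[ℂ] lp (fun _ : G => H) 2)) := by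
    rw [hsAlg_coe]; exact isClosed_closure
  refine hs_pos_bounded (hsAlg ι α hα) Φ fun x hx => ?_
  obtain ⟨N, hN⟩ := hΦ.2 1 (fun _ _ => star x * x)
    (fun _ _ => mul_mem (star_mem hx) hx) ⟨Matrix.of fun _ _ => x, by
      funext i j
      exact ((Matrix.mul_apply (M := (Matrix.of fun (_ _ : Fin 1) => x)ᴴ)
        (N := Matrix.of fun (_ _ : Fin 1) => x)).trans (Fin.sum_univ_one _)).symm⟩
  have h := congrFun (congrFun hN 0) 0
  rw [Matrix.mul_apply, Fin.sum_univ_one] at h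
  have h' : Φ (star x * x) = star (N 0 0) * N 0 0 := h
  rw [h']
  exact star_mul_self_nonneg _

/-- input side -/
def hsT0 : (G →₀ A) →ₗ[ℂ] (lp (fun _ : G => H) 2 →L[ℂ] lp (fun _ : G => H) 2) :=
  Finsupp.lsum ℂ fun s => hsGenLin ι α s

/-- output side -/
def hsT1 : (G →₀ A) →ₗ[ℂ] (lp (fun _ : G => H) 2 →L[ℂ] lp (fun _ : G => H) 2) :=
  Finsupp.lsum ℂ fun s => hsGenLin ι α s ∘ₗ hMap ι α E Φ s

theorem hsT0_single (s : G) (a : A) : hsT0 ι α (Finsupp.single s a) = piRep ι α a * lam s := by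
  unfold hsT0; rw [Finsupp.lsum_single]; rfl

theorem hsT1_single (s : G) (a : A) : hsT1 ι α E Φ (Finsupp.single s a)
    = piRep ι α (hMap ι α E Φ s a) * lam s := by
  unfold hsT1; rw [Finsupp.lsum_single]; rfl

theorem hsT_rel (hisom : ∀ a : A, ‖ι a‖ = ‖a‖) (hα : IsAction α) (hE : IsCondExp ι α E)
    (hΦ : CPOnCrossed ι α Φ) (f : G →₀ A) : HsRel ι α E Φ (hsT0 ι α f) (hsT1 ι α E Φ f) := by
  induction f using Finsupp.induction_linear with
  | zero => rw [map_zero, map_zero]; exact hs_rel_zero ι α E Φ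
  | add f g hf hg => rw [map_add, map_add]; exact hs_rel_add ι α E Φ hf hg
  | single s a =>
    rw [hsT0_single, hsT1_single]; exact hs_rel_gen ι α E Φ hisom hα hE hΦ a s

theorem hsT0_range : LinearMap.range (hsT0 ι α) = hsV ι α := by
  apply le_antisymm
  · rintro _ ⟨f, rfl⟩
    induction f using Finsupp.induction_linear with
    | zero => rw [map_zero]; exact zero_mem _
    | add f g hf hg => rw [map_add]; exact add_mem hf hg
    | single s a => rw [hsT0_single]; exact hs_gen_mem ι α a s
  · unfold hsV
    rw [Submodule.span_le]
    rintro _ ⟨a, t, rfl⟩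
    exact ⟨Finsupp.single t a, hsT0_single ι α t a⟩

theorem hsT1_mem (f : G →₀ A) : hsT1 ι α E Φ f ∈ hsV ι α := by
  induction f using Finsupp.induction_linear with
  | zero => rw [map_zero]; exact zero_mem _
  | add f g hf hg => rw [map_add]; exact add_mem hf hg
  | single s a => rw [hsT1_single]; exact hs_gen_mem ι α _ s

end HSRel
end
noncomputable section
open scoped ComplexOrder ENNReal
open Matrix
set_option linter.unusedSectionVars false

theorem hs_extend {X B : Type*} [AddCommGroup X] [Module ℂ X] [NormedAddCommGroup B]
    [NormedSpace ℂ B] [CompleteSpace B] (T0 T1 : X →ₗ[ℂ] B) (V : Submodule ℂ B)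
    (hV : LinearMap.range T0 = V) (hT1 : ∀ f, T1 f ∈ V)
    (C : ℝ) (hn : ∀ f, ‖T1 f‖ ≤ C * ‖T0 f‖) :
    ∃ S : B →ₗ[ℂ] B, (∀ f, S (T0 f) = T1 f) ∧
      (∀ x ∈ V.topologicalClosure, S x ∈ V.topologicalClosure) ∧
      ∀ x ∈ V.topologicalClosure, ‖S x‖ ≤ C * ‖x‖ := by
  have hmem : ∀ f, T0 f ∈ V := fun f => by
    rw [← hV]; exact LinearMap.mem_range_self _ _
  let e : X →ₗ[ℂ] V.topologicalClosure :=
    T0.codRestrict _ fun f => Submodule.le_topologicalClosure _ (hmem f)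
  have he : ∀ f, (e f : B) = T0 f := fun f => rfl
  have hd : DenseRange e := by
    rintro ⟨x, hx⟩
    rw [Topology.IsInducing.subtypeVal.closure_eq_preimage_closure_image]
    change x ∈ closure _
    refine closure_mono ?_ hx
    intro y hy
    change y ∈ V at hy
    rw [← hV] at hy
    obtain ⟨f, rfl⟩ := hy
    exact ⟨e f, ⟨f, rfl⟩, rfl⟩
  have hb : ∀ f, ‖T1 f‖ ≤ C * ‖e f‖ := fun f => hn f
  let S0 := T1.extendOfNorm e
  obtain ⟨S, hS⟩ := LinearMap.exists_extend (S0 : V.topologicalClosure →ₗ[ℂ] B)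
  have hS' : ∀ x : V.topologicalClosure, S x = S0 x := fun x =>
    LinearMap.congr_fun hS x
  refine ⟨S, ?_, ?_, ?_⟩
  · intro f
    rw [← he, hS']
    exact LinearMap.extendOfNorm_eq hd ⟨C, hb⟩ _
  · intro x hx
    have : ∀ y : V.topologicalClosure, S0 y ∈ V.topologicalClosure := by
      intro y
      refine hd.induction (P := fun y => S0 y ∈ V.topologicalClosure) ?_
        (isClosed_closure.preimage S0.continuous) y
      rintro _ ⟨f, rfl⟩
      change S0 (e f) ∈ _
      rw [LinearMap.extendOfNorm_eq hd ⟨C, hb⟩ f]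
      exact subset_closure (hT1 f)
    have h2 := this ⟨x, hx⟩
    rw [← hS'] at h2
    exact h2
  · intro x hx
    have h2 := LinearMap.norm_extendOfNorm_apply_le hd C hb ⟨x, hx⟩
    have h3 := hS' ⟨x, hx⟩
    change S x = _ at h3
    rw [h3]
    exact h2

theorem hs_exists_S
    {H : Type*} [NormedAddCommGroup H] [InnerProductSpace ℂ H] [CompleteSpace H]
    {A : Type*} [NonUnitalCStarAlgebra A] {G : Type*} [Group G]
    (ι : A →⋆ₙₐ[ℂ] (H →L[ℂ] H)) (hisom : ∀ a : A, ‖ι a‖ = ‖a‖)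
    (α : G → A ≃⋆ₐ[ℂ] A) (hα : IsAction α)
    (E : (lp (fun _ : G => H) 2 →L[ℂ] lp (fun _ : G => H) 2) →ₗ[ℂ] A)
    (hE : IsCondExp ι α E)
    (Φ : (lp (fun _ : G => H) 2 →L[ℂ] lp (fun _ : G => H) 2) →ₗ[ℂ]
         (lp (fun _ : G => H) 2 →L[ℂ] lp (fun _ : G => H) 2))
    (hΦ : CPOnCrossed ι α Φ) :
    ∃ S : (lp (fun _ : G => H) 2 →L[ℂ] lp (fun _ : G => H) 2) →ₗ[ℂ]
         (lp (fun _ : G => H) 2 →L[ℂ] lp (fun _ : G => H) 2),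
      HSGenProp ι α (hMap ι α E Φ) S ∧ (∀ x ∈ CrossedSet ι α, S x ∈ CrossedSet ι α) ∧
      ∃ C : ℝ, ∀ x ∈ CrossedSet ι α, ‖S x‖ ≤ C * ‖x‖ := by
  obtain ⟨C, hC, hn⟩ := hs_rel_norm ι α E Φ hisom hα hE hΦ
  obtain ⟨S, h1, h2, h3⟩ := hs_extend (hsT0 ι α) (hsT1 ι α E Φ) (hsV ι α) (hsT0_range ι α)
    (hsT1_mem ι α E Φ) C fun f => hn _ _ (subset_closure (by
      change _ ∈ hsV ι α
      rw [← hsT0_range]; exact LinearMap.mem_range_self _ _))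
      (hsT_rel ι α E Φ hisom hα hE hΦ f)
  refine ⟨S, fun a s => ?_, h2, C, h3⟩
  rw [← hsT0_single, ← hsT1_single, h1]

theorem hs_S_rel
    {H : Type*} [NormedAddCommGroup H] [InnerProductSpace ℂ H] [CompleteSpace H]
    {A : Type*} [NonUnitalCStarAlgebra A] {G : Type*} [Group G]
    (ι : A →⋆ₙₐ[ℂ] (H →L[ℂ] H)) (hisom : ∀ a : A, ‖ι a‖ = ‖a‖)
    (α : G → A ≃⋆ₐ[ℂ] A) (hα : IsAction α)
    (E : (lp (fun _ : G => H) 2 →L[ℂ] lp (fun _ : G => H) 2) →ₗ[ℂ] A)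
    (hE : IsCondExp ι α E)
    (Φ : (lp (fun _ : G => H) 2 →L[ℂ] lp (fun _ : G => H) 2) →ₗ[ℂ]
         (lp (fun _ : G => H) 2 →L[ℂ] lp (fun _ : G => H) 2))
    (hΦ : CPOnCrossed ι α Φ)
    (S : (lp (fun _ : G => H) 2 →L[ℂ] lp (fun _ : G => H) 2) →ₗ[ℂ]
         (lp (fun _ : G => H) 2 →L[ℂ] lp (fun _ : G => H) 2))
    (hS : HSGenProp ι α (hMap ι α E Φ) S)
    (C : ℝ) (hC : ∀ x ∈ CrossedSet ι α, ‖S x‖ ≤ C * ‖x‖)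
    {x : lp (fun _ : G => H) 2 →L[ℂ] lp (fun _ : G => H) 2} (hx : x ∈ CrossedSet ι α) :
    HsRel ι α E Φ x (S x) := by
  obtain ⟨C', hC', hb⟩ := hs_phi_bdd ι α Φ hα hΦ
  intro p q
  let h : (lp (fun _ : G => H) 2 →L[ℂ] lp (fun _ : G => H) 2) →ₗ[ℂ] (H →L[ℂ] H) :=
    hsEntLin p q ∘ₗ S - hsEntLin p q ∘ₗ Φ ∘ₗ hsBandLin ι α E (p * q⁻¹)
  have hh : ∀ x, h x = hsEnt (S x) p q - hsEnt (Φ (hsBand ι α E x (p * q⁻¹))) p q := fun x => rfl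
  have := hs_zero_closure ι α h (C + C') ?_ ?_ x hx
  · rw [hh, sub_eq_zero] at this
    exact this
  · intro x hx
    rw [hh]
    refine (norm_sub_le _ _).trans ?_
    have h1 := (hsEnt_norm_le (S x) p q).trans (hC x hx)
    have h2 := (hsEnt_norm_le (Φ (hsBand ι α E x (p * q⁻¹))) p q).trans
      (hb _ (hsBand_mem ι α E x _))
    have h3 : ‖hsBand ι α E x (p * q⁻¹)‖ ≤ ‖x‖ := by
      unfold hsBand
      refine (norm_mul_le _ _).trans ?_
      refine (mul_le_of_le_one_right (norm_nonneg _) (hs_lam_norm _)).trans ?_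
      exact (hs_pi_norm ι α _).trans (hs_El_norm ι α E hisom hE hx _)
    have h4 := mul_le_mul_of_nonneg_left h3 hC'
    linarith
  · intro a t
    rw [hh, hS, hs_rel_gen ι α E Φ hisom hα hE hΦ a t p q, sub_self]

end
noncomputable section
open scoped ComplexOrder ENNReal
open Matrix

/-- **Proposition 3.4.** If `Φ` is a completely positive map on `A ⋊_{α,r} G`, then
`h_Φ : G → B(A)`, `h_Φ(s)(a) = E(Φ(π(a)λ_s)λ_s*)`, is a completely positive Herz-Schur
`(A,G,α)`-multiplier. -/
theorem hMap_of_CP_is_herzSchurCP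
    {H : Type*} [NormedAddCommGroup H] [InnerProductSpace ℂ H] [CompleteSpace H]
    {A : Type*} [NonUnitalCStarAlgebra A] {G : Type*} [Group G]
    (ι : A →⋆ₙₐ[ℂ] (H →L[ℂ] H)) (hisom : ∀ a : A, ‖ι a‖ = ‖a‖)
    (hnd : NondegenerateRep ι)
    (α : G → A ≃⋆ₐ[ℂ] A) (hα : IsAction α)
    (E : (lp (fun _ : G => H) 2 →L[ℂ] lp (fun _ : G => H) 2) →ₗ[ℂ] A)
    (hE : IsCondExp ι α E)
    (Φ : (lp (fun _ : G => H) 2 →L[ℂ] lp (fun _ : G => H) 2) →ₗ[ℂ]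
         (lp (fun _ : G => H) 2 →L[ℂ] lp (fun _ : G => H) 2))
    (hΦ : CPOnCrossed ι α Φ) :
    IsHerzSchurMultiplierCP ι α (hMap ι α E Φ) := by
  obtain ⟨S, hS, hSm, C, hC⟩ := hs_exists_S ι hisom α hα E hE Φ hΦ
  have hR : ∀ x ∈ CrossedSet ι α, HsRel ι α E Φ x (S x) := fun x hx =>
    hs_S_rel ι hisom α hα E hE Φ hΦ S hS C hC hx
  obtain ⟨D, hD, hbd⟩ := hs_rel_bd ι α E Φ hisom hα hE hΦ
  refine ⟨S, hS, ⟨hSm, fun n M hM hp => ?_⟩, D, hD, fun n M hM => ?_⟩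
  · exact (hs_rel_pos ι α E Φ hisom hα hE hΦ M (M.map S) hM (fun i j => hR _ (hM i j))
      (HsPos.of_matPos hp)).matPos
  · exact (hbd n M (M.map S) ‖matOp M‖ hM (fun i j => hR _ (hM i j)) (norm_nonneg _)
      (HsBd.matOp M)).norm_le (by positivity)

end
end

section
/- Let (A,G,α) be a C*-dynamical system with G discrete, A unital with faithful tracial state τ, α τ-preserving, and τ' = τ∘E. If F : G → CB(A) is a completely positive Herz-Schur (A,G,α)-multiplier with τ∘F(e) ≤ τ and F(e)(1_A) = 1_A, then S_F is L²-bounded on (A⋊_{α,r}G, τ') and, under the identification L²(τ') ≅ ⊕_{t∈G} L²(A,τ), T_{S_F} = ⊕_{t∈G} T_{F(t)}; in particular T_{S_F} is a contraction. -/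
noncomputable section
open scoped ComplexOrder ENNReal
open Matrix

section Helpers

/-- algebraic Kadison-Schwarz from a 2x2 factorisation -/
lemma ks_alg {B : Type*} [Ring B] [StarRing B] (y y' z : B)
    (N : Matrix (Fin 2) (Fin 2) B)
    (h : !![1, y; y', z] = Nᴴ * N) :
    z - star y * y = star (N 0 1 - N 0 0 * y) * (N 0 1 - N 0 0 * y)
      + star (N 1 1 - N 1 0 * y) * (N 1 1 - N 1 0 * y) := by
  have h00 := congrFun (congrFun h 0) 0
  have h01 := congrFun (congrFun h 0) 1
  have h10 := congrFun (congrFun h 1) 0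
  have h11 := congrFun (congrFun h 1) 1
  simp [Matrix.mul_apply, Fin.sum_univ_two] at h00 h01 h10 h11
  have hy : star y = star (N 0 1) * N 0 0 + star (N 1 1) * N 1 0 := by
    rw [h01]; simp
  have e : star (N 0 1 - N 0 0 * y) * (N 0 1 - N 0 0 * y)
      + star (N 1 1 - N 1 0 * y) * (N 1 1 - N 1 0 * y)
      = (star (N 0 1) * N 0 1 + star (N 1 1) * N 1 1)
        - (star (N 0 1) * N 0 0 + star (N 1 1) * N 1 0) * y
        - star y * (star (N 0 0) * N 0 1 + star (N 1 0) * N 1 1)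
        + star y * (star (N 0 0) * N 0 0 + star (N 1 0) * N 1 0) * y := by
    simp only [star_sub, star_mul]
    noncomm_ring
  rw [e, ← h11, ← hy, ← h01, ← h00]
  noncomm_ring

lemma exists_star_mul_of_iota {B A : Type*} [CStarAlgebra A] [CStarAlgebra B] [PartialOrder B]
    [StarOrderedRing B] (ι : A →⋆ₙₐ[ℂ] B) (hisom : ∀ a : A, ‖ι a‖ = ‖a‖)
    (hι1 : ι 1 = 1) (a : A) (h : 0 ≤ ι a) : ∃ b : A, a = star b * b := by
  letI := CStarAlgebra.spectralOrder A
  haveI := CStarAlgebra.spectralOrderedRing A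
  have hinj : Function.Injective ι := by
    rw [injective_iff_map_eq_zero]
    intro a ha
    rw [← norm_eq_zero, ← hisom, ha, norm_zero]
  let ι' : A →⋆ₐ[ℂ] B :=
    { toFun := ι, map_one' := hι1, map_mul' := map_mul ι, map_zero' := map_zero ι,
      map_add' := map_add ι, map_star' := map_star ι,
      commutes' := fun c => by
        rw [Algebra.algebraMap_eq_smul_one, Algebra.algebraMap_eq_smul_one]
        rw [map_smul, hι1] }
  have hsa : IsSelfAdjoint a := by
    apply hinj
    rw [map_star]
    exact (IsSelfAdjoint.of_nonneg h)
  have hs := hsa.map_spectrum_real ι' hinj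
  have : 0 ≤ a := by
    rw [StarOrderedRing.nonneg_iff_spectrum_nonneg (R := ℝ) a hsa]
    intro r hr
    rw [← hs] at hr
    exact spectrum_nonneg_of_nonneg h hr
  exact CStarAlgebra.nonneg_iff_eq_star_mul_self.1 this

variable {H : Type*} [NormedAddCommGroup H] [InnerProductSpace ℂ H] [CompleteSpace H]
variable {A : Type*} [CStarAlgebra A] {G : Type*} [Group G]

lemma op_factor {K : Type*} [NormedAddCommGroup K] [InnerProductSpace ℂ K] [CompleteSpace K]
    {x : K →L[ℂ] K} (h : 0 ≤ x) : ∃ b : K →L[ℂ] K, x = star b * b :=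
  CStarAlgebra.nonneg_iff_eq_star_mul_self.1 h

lemma op_cstar {K : Type*} [NormedAddCommGroup K] [InnerProductSpace ℂ K] [CompleteSpace K]
    (x : K →L[ℂ] K) : ‖star x * x‖ = ‖x‖ * ‖x‖ :=
  CStarRing.norm_star_mul_self

lemma lam_apply' (t : G) (f : lp (fun _ : G => H) 2) (s : G) :
    (lam t f : ∀ _ : G, H) s = f (t⁻¹ * s) := rfl

lemma piRep_apply' (ι : A →⋆ₙₐ[ℂ] (H →L[ℂ] H)) (α : G → A ≃⋆ₐ[ℂ] A) (a : A)
    (f : lp (fun _ : G => H) 2) (s : G) :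
    (piRep ι α a f : ∀ _ : G, H) s = ι (α s⁻¹ a) (f s) := rfl

lemma opExt {S T : lp (fun _ : G => H) 2 →L[ℂ] lp (fun _ : G => H) 2}
    (h : ∀ (f : lp (fun _ : G => H) 2) (s : G), (S f : ∀ _ : G, H) s = (T f : ∀ _ : G, H) s) :
    S = T := by
  apply ContinuousLinearMap.ext; intro f
  apply lp.ext; funext s; exact h f s

lemma lam_one : lam (H := H) (1 : G) = 1 := by
  apply opExt; intro f s
  rw [lam_apply']; simp

lemma lam_mul (s t : G) : lam (H := H) s * lam t = lam (s * t) := by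
  apply opExt; intro f r
  rw [lam_apply', ContinuousLinearMap.mul_apply, lam_apply', lam_apply']
  simp [mul_assoc]

lemma lam_star (t : G) : star (lam (H := H) t) = lam t⁻¹ := by
  rw [ContinuousLinearMap.star_eq_adjoint]
  symm
  rw [ContinuousLinearMap.eq_adjoint_iff]
  intro f g
  rw [lp.inner_eq_tsum, lp.inner_eq_tsum, 
    ← (Equiv.mulLeft t).tsum_eq (fun i => inner ℂ (f i) ((lam t g : ∀ _ : G, H) i))]
  congr 1; funext s
  rw [lam_apply']
  simp [lam_apply']

lemma piRep_mul (ι : A →⋆ₙₐ[ℂ] (H →L[ℂ] H)) (α : G → A ≃⋆ₐ[ℂ] A) (a b : A) :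
    piRep ι α a * piRep ι α b = piRep ι α (a * b) := by
  apply opExt; intro f r
  rw [ContinuousLinearMap.mul_apply, piRep_apply', piRep_apply', piRep_apply', map_mul, map_mul]
  rfl

lemma piRep_one (ι : A →⋆ₙₐ[ℂ] (H →L[ℂ] H)) (hι1 : ι 1 = 1) (α : G → A ≃⋆ₐ[ℂ] A) :
    piRep ι α 1 = 1 := by
  apply opExt; intro f r
  rw [piRep_apply', map_one, hι1]
  rfl

lemma piRep_star (ι : A →⋆ₙₐ[ℂ] (H →L[ℂ] H)) (α : G → A ≃⋆ₐ[ℂ] A) (a : A) :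
    star (piRep ι α a) = piRep ι α (star a) := by
  rw [ContinuousLinearMap.star_eq_adjoint]
  symm
  rw [ContinuousLinearMap.eq_adjoint_iff]
  intro f g
  rw [lp.inner_eq_tsum, lp.inner_eq_tsum]
  congr 1; funext s
  rw [piRep_apply', piRep_apply', map_star, map_star, ContinuousLinearMap.star_eq_adjoint,
    ContinuousLinearMap.adjoint_inner_left]

lemma piRep_cov (ι : A →⋆ₙₐ[ℂ] (H →L[ℂ] H)) (α : G → A ≃⋆ₐ[ℂ] A) (hα : IsAction α) (a : A)
    (t : G) : lam t * piRep ι α a = piRep ι α (α t a) * lam t := by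
  apply opExt; intro f r
  rw [ContinuousLinearMap.mul_apply, ContinuousLinearMap.mul_apply, piRep_apply', lam_apply',
    piRep_apply', lam_apply', ← hα.2]
  simp

/-- crossed product as a submodule -/
def crossedSub (ι : A →⋆ₙₐ[ℂ] (H →L[ℂ] H)) (α : G → A ≃⋆ₐ[ℂ] A) :
    Submodule ℂ (lp (fun _ : G => H) 2 →L[ℂ] lp (fun _ : G => H) 2) :=
  (Submodule.span ℂ {x | ∃ (a : A) (t : G), x = piRep ι α a * lam t}).topologicalClosure

lemma mem_crossedSub {ι : A →⋆ₙₐ[ℂ] (H →L[ℂ] H)} {α : G → A ≃⋆ₐ[ℂ] A}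
    {x : lp (fun _ : G => H) 2 →L[ℂ] lp (fun _ : G => H) 2} :
    x ∈ CrossedSet ι α ↔ x ∈ crossedSub ι α := Iff.rfl

lemma crossed_gen (ι : A →⋆ₙₐ[ℂ] (H →L[ℂ] H)) (α : G → A ≃⋆ₐ[ℂ] A) (a : A) (t : G) :
    piRep ι α a * lam t ∈ CrossedSet ι α :=
  subset_closure (Submodule.subset_span ⟨a, t, rfl⟩)

lemma crossed_one (ι : A →⋆ₙₐ[ℂ] (H →L[ℂ] H)) (hι1 : ι 1 = 1) (α : G → A ≃⋆ₐ[ℂ] A) :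
    1 ∈ CrossedSet ι α := by
  have := crossed_gen ι α 1 1
  rwa [piRep_one ι hι1, lam_one, one_mul] at this

lemma gen_star (ι : A →⋆ₙₐ[ℂ] (H →L[ℂ] H)) (α : G → A ≃⋆ₐ[ℂ] A) (hα : IsAction α) (a : A) (t : G) :
    star (piRep ι α a * lam t) = piRep ι α (α t⁻¹ (star a)) * lam t⁻¹ := by
  rw [star_mul, lam_star, piRep_star, piRep_cov ι α hα]

lemma gen_mul (ι : A →⋆ₙₐ[ℂ] (H →L[ℂ] H)) (α : G → A ≃⋆ₐ[ℂ] A) (hα : IsAction α)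
    (a b : A) (s t : G) :
    (piRep ι α a * lam s) * (piRep ι α b * lam t)
      = piRep ι α (a * α s b) * lam (s * t) := by
  rw [mul_assoc, ← mul_assoc (lam s), piRep_cov ι α hα, mul_assoc, lam_mul, ← mul_assoc, piRep_mul]

lemma crossed_star (ι : A →⋆ₙₐ[ℂ] (H →L[ℂ] H)) (α : G → A ≃⋆ₐ[ℂ] A) (hα : IsAction α)
    {x : lp (fun _ : G => H) 2 →L[ℂ] lp (fun _ : G => H) 2} (hx : x ∈ CrossedSet ι α) :
    star x ∈ CrossedSet ι α := by
  refine map_mem_closure continuous_star hx ?_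
  intro y hy
  induction hy using Submodule.span_induction with
  | mem y hy =>
    obtain ⟨a, t, rfl⟩ := hy
    rw [gen_star ι α hα]
    exact Submodule.subset_span ⟨_, _, rfl⟩
  | zero => rw [star_zero]; exact Submodule.zero_mem _
  | add y z _ _ h1 h2 => rw [star_add]; exact Submodule.add_mem _ h1 h2
  | smul c y _ h => rw [star_smul]; exact Submodule.smul_mem _ _ h

lemma crossed_mul (ι : A →⋆ₙₐ[ℂ] (H →L[ℂ] H)) (α : G → A ≃⋆ₐ[ℂ] A) (hα : IsAction α)
    {x y : lp (fun _ : G => H) 2 →L[ℂ] lp (fun _ : G => H) 2} (hx : x ∈ CrossedSet ι α)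
    (hy : y ∈ CrossedSet ι α) :
    x * y ∈ CrossedSet ι α := by
  refine map_mem_closure₂ continuous_mul hx hy ?_
  intro u hu v hv
  have hu' : u ∈ Submodule.span ℂ {x | ∃ (a : A) (t : G), x = piRep ι α a * lam t} := hu
  have hv' : v ∈ Submodule.span ℂ {x | ∃ (a : A) (t : G), x = piRep ι α a * lam t} := hv
  clear hu hv
  show u * v ∈ Submodule.span ℂ {x | ∃ (a : A) (t : G), x = piRep ι α a * lam t}
  induction hu' using Submodule.span_induction with
  | mem y hy =>
    obtain ⟨a, s, rfl⟩ := hy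
    induction hv' using Submodule.span_induction with
    | mem y hy =>
      obtain ⟨b, t, rfl⟩ := hy
      rw [gen_mul ι α hα]
      exact Submodule.subset_span ⟨_, _, rfl⟩
    | zero => rw [mul_zero]; exact Submodule.zero_mem _
    | add y z _ _ h1 h2 => rw [mul_add]; exact Submodule.add_mem _ h1 h2
    | smul c y _ h => rw [mul_smul_comm]; exact Submodule.smul_mem _ _ h
  | zero => rw [zero_mul]; exact Submodule.zero_mem _
  | add y z _ _ h1 h2 => rw [add_mul]; exact Submodule.add_mem _ h1 h2
  | smul c y _ h => rw [smul_mul_assoc]; exact Submodule.smul_mem _ _ h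

lemma eval_single (v : H) (s : G) :
    ((lpSingle (1 : G) v : lp (fun _ : G => H) 2) : ∀ _ : G, H) s
      = by classical exact if s = 1 then v else 0 := by
  classical
  by_cases h : s = 1
  · subst h
    rw [if_pos rfl]
    exact lp.single_apply_self (E := fun _ : G => H) 2 (1 : G) v
  · simp only [h, if_false]
    exact lp.single_apply_ne (E := fun _ : G => H) 2 (1 : G) v h

lemma iota_inj {ι : A →⋆ₙₐ[ℂ] (H →L[ℂ] H)} (hisom : ∀ a : A, ‖ι a‖ = ‖a‖) :
    Function.Injective ι := by
  rw [injective_iff_map_eq_zero]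
  intro a ha
  rw [← norm_eq_zero, ← hisom, ha, norm_zero]

lemma E_gen_one (ι : A →⋆ₙₐ[ℂ] (H →L[ℂ] H)) (hisom : ∀ a : A, ‖ι a‖ = ‖a‖)
    (α : G → A ≃⋆ₐ[ℂ] A) (hα : IsAction α)
    (E : (lp (fun _ : G => H) 2 →L[ℂ] lp (fun _ : G => H) 2) →ₗ[ℂ] A)
    (hE : IsCondExp ι α E) (a : A) : E (piRep ι α a * lam 1) = a := by
  apply iota_inj hisom
  rw [hE _ (crossed_gen ι α a 1)]
  ext v
  show (piRep ι α a (lam 1 (lpSingle (1 : G) v)) : ∀ _ : G, H) 1 = _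
  rw [piRep_apply', lam_apply', eval_single, inv_one, hα.1]
  simp

lemma E_gen_ne (ι : A →⋆ₙₐ[ℂ] (H →L[ℂ] H)) (hisom : ∀ a : A, ‖ι a‖ = ‖a‖)
    (α : G → A ≃⋆ₐ[ℂ] A)
    (E : (lp (fun _ : G => H) 2 →L[ℂ] lp (fun _ : G => H) 2) →ₗ[ℂ] A)
    (hE : IsCondExp ι α E) (a : A) {t : G} (ht : t ≠ 1) : E (piRep ι α a * lam t) = 0 := by
  apply iota_inj hisom
  rw [hE _ (crossed_gen ι α a t)]
  ext v
  show (piRep ι α a (lam t (lpSingle (1 : G) v)) : ∀ _ : G, H) 1 = _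
  rw [piRep_apply', lam_apply', eval_single]
  simp [ht]

lemma lpEval_adj : (lpEval (1 : G) : lp (fun _ : G => H) 2 →L[ℂ] H)
    = ContinuousLinearMap.adjoint (lpSingle (1 : G)) := by
  classical
  rw [ContinuousLinearMap.eq_adjoint_iff]
  intro f v
  exact (lp.inner_single_right (𝕜 := ℂ) (1 : G) v f).symm

lemma lpSingle_norm : ‖(lpSingle (1 : G) : H →L[ℂ] lp (fun _ : G => H) 2)‖ ≤ 1 :=
  LinearMap.mkContinuous_norm_le _ zero_le_one _

lemma lpEval_norm : ‖(lpEval (1 : G) : lp (fun _ : G => H) 2 →L[ℂ] H)‖ ≤ 1 :=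
  LinearMap.mkContinuous_norm_le _ zero_le_one _

lemma E_norm (ι : A →⋆ₙₐ[ℂ] (H →L[ℂ] H)) (hisom : ∀ a : A, ‖ι a‖ = ‖a‖)
    (α : G → A ≃⋆ₐ[ℂ] A)
    (E : (lp (fun _ : G => H) 2 →L[ℂ] lp (fun _ : G => H) 2) →ₗ[ℂ] A)
    (hE : IsCondExp ι α E) {x : lp (fun _ : G => H) 2 →L[ℂ] lp (fun _ : G => H) 2}
    (hx : x ∈ CrossedSet ι α) : ‖E x‖ ≤ ‖x‖ := by
  rw [← hisom, hE x hx]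
  calc _ ≤ ‖(lpEval (1 : G) : lp (fun _ : G => H) 2 →L[ℂ] H)‖ * (‖x‖ * ‖(lpSingle (1 : G) : H →L[ℂ] lp (fun _ : G => H) 2)‖) :=
        (ContinuousLinearMap.opNorm_comp_le _ _).trans
          (mul_le_mul_of_nonneg_left (ContinuousLinearMap.opNorm_comp_le _ _) (norm_nonneg _))
    _ ≤ 1 * (‖x‖ * 1) := by
        gcongr
        · exact lpEval_norm
        · exact lpSingle_norm
    _ = ‖x‖ := by ring

lemma E_pos (ι : A →⋆ₙₐ[ℂ] (H →L[ℂ] H)) (hisom : ∀ a : A, ‖ι a‖ = ‖a‖) (hι1 : ι 1 = 1)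
    (α : G → A ≃⋆ₐ[ℂ] A)
    (E : (lp (fun _ : G => H) 2 →L[ℂ] lp (fun _ : G => H) 2) →ₗ[ℂ] A)
    (hE : IsCondExp ι α E) {x : lp (fun _ : G => H) 2 →L[ℂ] lp (fun _ : G => H) 2}
    (hx : x ∈ CrossedSet ι α) (h0 : 0 ≤ x) : ∃ b : A, E x = star b * b := by
  apply exists_star_mul_of_iota ι hisom hι1
  rw [hE x hx, lpEval_adj, ContinuousLinearMap.nonneg_iff_isPositive]
  rw [ContinuousLinearMap.nonneg_iff_isPositive] at h0
  exact h0.adjoint_conj _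

lemma Phi_KS (ι : A →⋆ₙₐ[ℂ] (H →L[ℂ] H)) (hι1 : ι 1 = 1)
    (α : G → A ≃⋆ₐ[ℂ] A) (hα : IsAction α)
    (Φ : (lp (fun _ : G => H) 2 →L[ℂ] lp (fun _ : G => H) 2) →ₗ[ℂ]
         (lp (fun _ : G => H) 2 →L[ℂ] lp (fun _ : G => H) 2))
    (hCP : CPOnCrossed ι α Φ) (hΦ1 : Φ 1 = 1)
    {x : lp (fun _ : G => H) 2 →L[ℂ] lp (fun _ : G => H) 2}
    (hx : x ∈ CrossedSet ι α) : star (Φ x) * Φ x ≤ Φ (star x * x) := by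
  obtain ⟨N, hN⟩ := hCP.2 2 !![1, x; star x, star x * x] (by
    intro i j
    fin_cases i <;> fin_cases j
    · exact crossed_one ι hι1 α
    · exact hx
    · exact crossed_star ι α hα hx
    · exact crossed_mul ι α hα (crossed_star ι α hα hx) hx)
    ⟨!![1, x; 0, 0], by
      ext1 i j
      fin_cases i <;> fin_cases j <;> simp [Matrix.mul_apply, Fin.sum_univ_two]⟩
  have h := ks_alg (Φ x) (Φ (star x)) (Φ (star x * x)) N (by
    rw [← hN]
    ext1 i j
    fin_cases i <;> fin_cases j <;> simp [hΦ1])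
  rw [← sub_nonneg, h]
  exact add_nonneg (star_mul_self_nonneg _) (star_mul_self_nonneg _)

lemma Phi_pos (ι : A →⋆ₙₐ[ℂ] (H →L[ℂ] H))
    (α : G → A ≃⋆ₐ[ℂ] A)
    (Φ : (lp (fun _ : G => H) 2 →L[ℂ] lp (fun _ : G => H) 2) →ₗ[ℂ]
         (lp (fun _ : G => H) 2 →L[ℂ] lp (fun _ : G => H) 2))
    (hCP : CPOnCrossed ι α Φ)
    {x : lp (fun _ : G => H) 2 →L[ℂ] lp (fun _ : G => H) 2}
    (hx : x ∈ CrossedSet ι α) (h0 : 0 ≤ x) : 0 ≤ Φ x := by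
  obtain ⟨b, hb⟩ := op_factor h0
  obtain ⟨N, hN⟩ := hCP.2 1 !![x] (by
    intro i j
    fin_cases i; fin_cases j
    exact hx)
    ⟨!![b], by
      ext1 i j
      fin_cases i; fin_cases j; simp [Matrix.mul_apply, hb]⟩
  have h := congrFun (congrFun hN 0) 0
  simp [Matrix.mul_apply] at h
  rw [h]
  exact star_mul_self_nonneg _

lemma Phi_norm (ι : A →⋆ₙₐ[ℂ] (H →L[ℂ] H)) (hι1 : ι 1 = 1)
    (α : G → A ≃⋆ₐ[ℂ] A) (hα : IsAction α)
    (Φ : (lp (fun _ : G => H) 2 →L[ℂ] lp (fun _ : G => H) 2) →ₗ[ℂ]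
         (lp (fun _ : G => H) 2 →L[ℂ] lp (fun _ : G => H) 2))
    (hCP : CPOnCrossed ι α Φ) (hΦ1 : Φ 1 = 1)
    {x : lp (fun _ : G => H) 2 →L[ℂ] lp (fun _ : G => H) 2}
    (hx : x ∈ CrossedSet ι α) : ‖Φ x‖ ≤ ‖x‖ := by
  have h1 := Phi_KS ι hι1 α hα Φ hCP hΦ1 hx
  have hy : star x * x ∈ CrossedSet ι α := crossed_mul ι α hα (crossed_star ι α hα hx) hx
  have h2 : star x * x ≤ ((‖star x * x‖ : ℝ) : ℂ) • 1 := by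
    have := (IsSelfAdjoint.star_mul_self x).le_algebraMap_norm_self
    rwa [Algebra.algebraMap_eq_smul_one, ← Complex.coe_smul] at this
  have h3 : 0 ≤ Φ (((‖star x * x‖ : ℝ) : ℂ) • 1 - star x * x) := by
    apply Phi_pos ι α Φ hCP _ (sub_nonneg.2 h2)
    rw [mem_crossedSub]
    exact Submodule.sub_mem _ (Submodule.smul_mem _ _ (crossed_one ι hι1 α)) hy
  rw [map_sub, map_smul, hΦ1, sub_nonneg] at h3
  have h4 := h1.trans h3
  have h5 : ‖star (Φ x) * Φ x‖ ≤ ‖star x * x‖ := by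
    rw [CStarAlgebra.norm_le_iff_le_algebraMap _ (norm_nonneg _) (star_mul_self_nonneg _),
      Algebra.algebraMap_eq_smul_one, ← Complex.coe_smul]
    exact h4
  rw [op_cstar, op_cstar] at h5
  nlinarith [norm_nonneg x, norm_nonneg (Φ x)]

lemma piRep_norm (ι : A →⋆ₙₐ[ℂ] (H →L[ℂ] H))
    (α : G → A ≃⋆ₐ[ℂ] A) (a : A) : ‖piRep ι α a‖ ≤ ‖a‖ := by
  have h : ‖piRep ι α a‖ ≤ max ‖a‖ 0 := by
    unfold piRep diagOp
    exact LinearMap.mkContinuous_norm_le _ (le_max_right ‖a‖ 0) _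
  simpa using h

end Helpers


/-- **Lemma 3.6.** If `F : G → CB(A)` is a completely positive Herz-Schur
`(A,G,α)`-multiplier with `τ ∘ F(e) ≤ τ` and `F(e)(1) = 1`, then `S_F` is `L²`-bounded
on `(A ⋊_{α,r} G, τ')` and, under the identification `L²(τ') ≅ ⊕_t L²(A,τ)`,
`T_{S_F} = ⊕_t T_{F(t)}` (expressed here by the diagonal action
`S_F(π(a)λ_t) = π(F(t)(a))λ_t`); in particular `T_{S_F}` is a contraction. -/
theorem SF_L2_contraction
    {H : Type*} [NormedAddCommGroup H] [InnerProductSpace ℂ H] [CompleteSpace H]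
    {A : Type*} [CStarAlgebra A] {G : Type*} [Group G]
    (ι : A →⋆ₙₐ[ℂ] (H →L[ℂ] H)) (hisom : ∀ a : A, ‖ι a‖ = ‖a‖)
    (hnd : NondegenerateRep ι) (hι1 : ι 1 = 1)
    (α : G → A ≃⋆ₐ[ℂ] A) (hα : IsAction α)
    (τ : A →ₗ[ℂ] ℂ) (hτpos : IsPositiveFunctional τ) (hτtr : IsTracial τ)
    (hτf : IsFaithfulFunctional τ) (hτ1 : τ 1 = 1)
    (hτα : ∀ (t : G) (a : A), τ (α t a) = τ a)
    (E : (lp (fun _ : G => H) 2 →L[ℂ] lp (fun _ : G => H) 2) →ₗ[ℂ] A)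
    (hE : IsCondExp ι α E)
    (F : G → (A →ₗ[ℂ] A))
    (Φ : (lp (fun _ : G => H) 2 →L[ℂ] lp (fun _ : G => H) 2) →ₗ[ℂ]
         (lp (fun _ : G => H) 2 →L[ℂ] lp (fun _ : G => H) 2))
    (hgen : HSGenProp ι α F Φ) (hCP : CPOnCrossed ι α Φ)
    (hτF : ∀ a : A, τ (F 1 (star a * a)) ≤ τ (star a * a))
    (hFe : F 1 1 = 1) :
    -- `S_F` is `L²`-bounded, indeed an `L²`-contraction …
    (∀ x ∈ CrossedSet ι α, l2normCr τ E (Φ x) ≤ l2normCr τ E x) ∧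
    -- … and it acts diagonally, as `T_{F(t)}` on each summand `L²_t(τ') ≅ L²(A,τ)`
    (∀ (t : G) (a : A),
      Φ (piRep ι α a * lam t) = piRep ι α (F t a) * lam t ∧
      l2normCr τ E (Φ (piRep ι α a * lam t)) = l2norm τ (F t a)) := by
  have hΦ1 : Φ 1 = 1 := by
    have := hgen 1 1
    rwa [hFe, piRep_one ι hι1, lam_one, one_mul] at this
  have hmul : ∀ x ∈ CrossedSet ι α, star x * x ∈ CrossedSet ι α := fun x hx =>
    crossed_mul ι α hα (crossed_star ι α hα hx) hx
  have hEF : ∀ x ∈ CrossedSet ι α, E (Φ x) = F 1 (E x) := by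
    intro x hx
    have hspan : ∀ y ∈ Submodule.span ℂ {x | ∃ (a : A) (t : G), x = piRep ι α a * lam t},
        E (Φ y) = F 1 (E y) := by
      intro y hy
      induction hy using Submodule.span_induction with
      | mem y hy =>
        obtain ⟨a, t, rfl⟩ := hy
        rw [hgen]
        by_cases ht : t = 1
        · subst ht
          rw [E_gen_one ι hisom α hα E hE, E_gen_one ι hisom α hα E hE]
        · rw [E_gen_ne ι hisom α E hE _ ht, E_gen_ne ι hisom α E hE _ ht, map_zero]
      | zero => simp
      | add y z _ _ h1 h2 => simp [h1, h2]
      | smul c y _ h => simp [h]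
    have hF1 : ∀ a, ‖F 1 a‖ ≤ ‖a‖ := by
      intro a
      have h1 := E_norm ι hisom α E hE (crossed_gen ι α (F 1 a) 1)
      rw [E_gen_one ι hisom α hα E hE, ← hgen] at h1
      refine h1.trans ((Phi_norm ι hι1 α hα Φ hCP hΦ1 (crossed_gen ι α a 1)).trans ?_)
      rw [lam_one, mul_one]
      exact piRep_norm ι α a
    rw [← sub_eq_zero, ← norm_le_zero_iff]
    refine le_of_forall_pos_le_add fun ε hε => ?_
    obtain ⟨y, hy, hxy⟩ := Metric.mem_closure_iff.1 hx (ε / 2) (by positivity)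
    have hy' : y ∈ CrossedSet ι α := subset_closure hy
    have hd : x - y ∈ CrossedSet ι α := by
      rw [mem_crossedSub]; exact Submodule.sub_mem _ hx hy'
    have e : E (Φ x) - F 1 (E x) = E (Φ (x - y)) - F 1 (E (x - y)) := by
      simp only [map_sub, hspan y hy]; abel
    rw [e]
    rw [dist_eq_norm] at hxy
    have a1 := (E_norm ι hisom α E hE (hCP.1 _ hd)).trans (Phi_norm ι hι1 α hα Φ hCP hΦ1 hd)
    have a2 := (hF1 (E (x - y))).trans (E_norm ι hisom α E hE hd)
    have a3 := norm_sub_le (E (Φ (x - y))) (F 1 (E (x - y)))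
    linarith
  refine ⟨?_, ?_⟩
  · intro x hx
    unfold l2normCr
    apply Real.sqrt_le_sqrt
    have k1 := Phi_KS ι hι1 α hα Φ hCP hΦ1 hx
    obtain ⟨b, hb⟩ := E_pos ι hisom hι1 α E hE
      (x := Φ (star x * x) - star (Φ x) * Φ x)
      (by rw [mem_crossedSub]
          exact Submodule.sub_mem _ (hCP.1 _ (hmul x hx)) (hmul _ (hCP.1 _ hx)))
      (sub_nonneg.2 k1)
    obtain ⟨c, hc⟩ := E_pos ι hisom hι1 α E hE (hmul x hx) (star_mul_self_nonneg x)
    have p1 := hτpos b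
    rw [← hb, map_sub, map_sub, sub_nonneg, hEF _ (hmul x hx), hc] at p1
    have p2 := p1.trans (hτF c)
    rw [← hc] at p2
    exact (Complex.le_def.1 p2).1
  · intro t a
    refine ⟨hgen a t, ?_⟩
    rw [hgen]
    unfold l2normCr l2norm
    congr 2
    rw [gen_star ι α hα, gen_mul ι α hα, inv_mul_cancel, E_gen_one ι hisom α hα E hE, ← map_mul,
      hτα]

end
end
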